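/- arXiv:1203.0253 — 5 statements merged into one kernel-verified Lean document; each statement's English description precedes it below -/
import Mathlib

section
/- Let f ∈ ℝ[X₁,…,Xₙ], let e ≥ 0 be an integer, set d = e + ⌈deg(f)/2⌉, and let 𝒯 be a subset of the set of monomials of total degree ≤ e. Then f ∈ RSOS(𝒯) if and only if there exist real symmetric positive semidefinite matrices W¹ (with rows and columns indexed by the exponent multi-indices of degree ≤ d) and W² (with rows and columns indexed by the exponents of the monomials in 𝒯) with trace(W²) = 1 such that the polynomial identity Σ_{α,β} W¹_{α,β} X^{α+β} = f(X) · Σ_{γ,δ} W²_{γ,δ} X^{γ+δ} holds. -/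
open MvPolynomial

/-- Exponent multi-indices in `n` variables of total degree at most `d`
(the exponents of the monomials of total degree `≤ d`). -/
abbrev Idx (n d : ℕ) : Type := {α : Fin n →₀ ℕ // α.degree ≤ d}

noncomputable instance (n d : ℕ) : Fintype (Idx n d) :=
  Set.Finite.fintype (s := {α : Fin n →₀ ℕ | α.degree ≤ d}) <| by
    apply Set.Finite.subset
      (Set.finite_Iic (Finsupp.equivFunOnFinite.symm fun _ : Fin n => d))
    intro α hα
    simp only [Set.mem_Iic, Finsupp.le_def]
    intro i
    exact le_trans (Finsupp.le_degree i α) hα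

/-- `f ∈ RSOS(𝒯)` : there are polynomials `u₁,…,u_l, v₁,…,v_{l'}` with
`supp(vⱼ) ⊆ 𝒯` for all `j` and `Σⱼ vⱼ² ≠ 0` such that `f · Σⱼ vⱼ² = Σᵢ uᵢ²`. -/
def RSOS (n : ℕ) (𝒯 : Finset (Fin n →₀ ℕ)) (f : MvPolynomial (Fin n) ℝ) : Prop :=
  ∃ (l l' : ℕ) (u : Fin l → MvPolynomial (Fin n) ℝ)
    (v : Fin l' → MvPolynomial (Fin n) ℝ),
    (∀ j, (v j).support ⊆ 𝒯) ∧ (∑ j, v j ^ 2) ≠ 0 ∧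
      f * (∑ j, v j ^ 2) = ∑ i, u i ^ 2

/-- `f/g ∈ RSOS(𝒯)` for a rational function `f/g` : there are polynomials
`u₁,…,u_l, v₁,…,v_{l'}` with `supp(vⱼ) ⊆ 𝒯` for all `j` and `Σⱼ vⱼ² ≠ 0`
such that `f · Σⱼ vⱼ² = g · Σᵢ uᵢ²`. -/
def RSOSfrac (n : ℕ) (𝒯 : Finset (Fin n →₀ ℕ)) (f g : MvPolynomial (Fin n) ℝ) : Prop :=
  ∃ (l l' : ℕ) (u : Fin l → MvPolynomial (Fin n) ℝ)
    (v : Fin l' → MvPolynomial (Fin n) ℝ),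
    (∀ j, (v j).support ⊆ 𝒯) ∧ (∑ j, v j ^ 2) ≠ 0 ∧
      f * (∑ j, v j ^ 2) = g * ∑ i, u i ^ 2

/-- The moment matrix of order `t` of a sequence `y`, with rows and columns
indexed by multi-indices of degree `≤ t` and `(α,β)` entry `y_{α+β}`. -/
noncomputable def momentMatrix (n t : ℕ) (y : (Fin n →₀ ℕ) → ℝ) :
    Matrix (Idx n t) (Idx n t) ℝ :=
  fun α β => y (α.1 + β.1)

/-- The localizing moment matrix `M_t(qy)` of order `t`, with `(α,β)` entry
`Σ_γ q_γ y_{γ+α+β}`. -/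
noncomputable def locMomentMatrix (n t : ℕ) (q : MvPolynomial (Fin n) ℝ)
    (y : (Fin n →₀ ℕ) → ℝ) : Matrix (Idx n t) (Idx n t) ℝ :=
  fun α β => ∑ γ ∈ q.support, q.coeff γ * y (γ + α.1 + β.1)

/-- The localizing moment matrix `M(qy)` with rows and columns indexed by the
exponents of the monomials in `𝒯`, with `(α,β)` entry `Σ_γ q_γ y_{γ+α+β}`. -/
noncomputable def locMomentMatrixOn (n : ℕ) (𝒯 : Finset (Fin n →₀ ℕ))
    (q : MvPolynomial (Fin n) ℝ) (y : (Fin n →₀ ℕ) → ℝ) : Matrix 𝒯 𝒯 ℝ :=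
  fun α β => ∑ γ ∈ q.support, q.coeff γ * y (γ + α.1 + β.1)

/-- The linear form `L_y(p) = Σ_α y_α p_α` associated to a sequence `y`. -/
noncomputable def LForm (n : ℕ) (y : (Fin n →₀ ℕ) → ℝ)
    (p : MvPolynomial (Fin n) ℝ) : ℝ :=
  ∑ α ∈ p.support, y α * p.coeff α

/-- `p` is a sum of squares of polynomials. -/
def IsSOS (n : ℕ) (p : MvPolynomial (Fin n) ℝ) : Prop :=
  ∃ (l : ℕ) (u : Fin l → MvPolynomial (Fin n) ℝ), p = ∑ i, u i ^ 2

/-!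
Factoring a positive semidefinite matrix as `W = Bᵀ B` turns the Gram form `zᵀ W z` into the sum of
the squares of the entries of `B z`, so the two matrices encode the two sums of squares. In a sum
of squares `∑ⱼ uⱼ²`, the leading coefficients of largest degree enter squared and cannot cancel.
Hence `deg uᵢ ≤ deg (f ∑ⱼ vⱼ²) / 2`, which gives the bound `d` on the monomials needed for `W¹`, and
the form of `W²` vanishes only for `W² = 0`. Since the identity is homogeneous in `(W¹, W²)`,
dividing by `trace W² > 0` normalizes it.
-/

section FormallyReal

variable {A κ : Type*}

theorem exists_eq_sum_sq_of_isSumSq [Semiring A] {a : A} (ha : IsSumSq a) :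
    ∃ (l : ℕ) (u : Fin l → A), a = ∑ i, u i ^ 2 := by
  induction ha with
  | zero => exact ⟨0, 0, by simp⟩
  | sq_add b _ ih =>
    obtain ⟨l, u, rfl⟩ := ih
    exact ⟨l + 1, Fin.cons b u, by simp [Fin.sum_univ_succ, sq]⟩

theorem eq_zero_of_sum_sq_eq_zero [Ring A] [IsFormallyReal A] [Fintype κ] {u : κ → A}
    (h : ∑ j, u j ^ 2 = 0) (i : κ) : u i = 0 := by
  classical
  simp only [sq] at h
  rw [← Finset.add_sum_erase _ _ (Finset.mem_univ i)] at h
  exact sq_eq_zero_iff.1 <| (sq (u i)).trans <|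
    IsFormallyReal.eq_zero_of_add_right (.mul_self (u i)) (.sum_mul_self _ u) h

end FormallyReal

section SumsOfSquares

variable {σ R κ : Type*} [CommRing R] [IsFormallyReal R] [Fintype κ]

theorem exists_coeff_degree_add_degree_sum_sq_ne_zero (o : MonomialOrder σ)
    {u : κ → MvPolynomial σ R} {i : κ} (hi : u i ≠ 0) :
    ∃ k, (∀ j, o.toSyn (o.degree (u j)) ≤ o.toSyn (o.degree (u k))) ∧
      coeff (o.degree (u k) + o.degree (u k)) (∑ j, u j ^ 2) ≠ 0 := by
  classical
  obtain ⟨k, hk, hmax⟩ := (Finset.univ.filter fun j ↦ u j ≠ 0).exists_max_image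
    (fun j ↦ o.toSyn (o.degree (u j))) ⟨i, by simpa using hi⟩
  have hle (j : κ) : o.toSyn (o.degree (u j)) ≤ o.toSyn (o.degree (u k)) := by
    by_cases hj : u j = 0
    · simp [hj]
    · exact hmax j (by simpa using hj)
  have hcoeff : coeff (o.degree (u k) + o.degree (u k)) (∑ j, u j ^ 2) =
      ∑ j, coeff (o.degree (u k)) (u j) ^ 2 := by
    simp only [sq, coeff_sum, o.coeff_mul_of_add_of_degree_le (hle _) (hle _)]
  refine ⟨k, hle, fun h ↦ ?_⟩
  have hlead : coeff (o.degree (u k)) (u k) = 0 := eq_zero_of_sum_sq_eq_zero (hcoeff ▸ h) k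
  exact (Finset.mem_filter.1 hk).2 (o.coeff_degree_eq_zero_iff.1 hlead)

instance instIsFormallyRealMvPolynomial : IsFormallyReal (MvPolynomial σ R) := by
  refine .of_eq_zero_of_eq_zero_of_mul_self_add fun {s a} hs h ↦ by_contra fun ha ↦ ?_
  obtain ⟨_, _⟩ := exists_wellFoundedGT σ
  obtain ⟨l, u, rfl⟩ := exists_eq_sum_sq_of_isSumSq hs
  let v : Fin (l + 1) → MvPolynomial σ R := Fin.cons a u
  have hv : ∑ i, v i ^ 2 = 0 := by simpa [v, Fin.sum_univ_succ, sq] using h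
  obtain ⟨k, -, hk⟩ := exists_coeff_degree_add_degree_sum_sq_ne_zero MonomialOrder.degLex
    (u := v) (i := 0) ha
  exact hk (by rw [hv, coeff_zero])

theorem two_mul_totalDegree_le_totalDegree_sum_sq (u : κ → MvPolynomial σ R) (i : κ) :
    2 * (u i).totalDegree ≤ (∑ j, u j ^ 2).totalDegree := by
  by_cases hi : u i = 0
  · simp [hi]
  obtain ⟨_, _⟩ := exists_wellFoundedGT σ
  obtain ⟨k, hmax, hk⟩ := exists_coeff_degree_add_degree_sum_sq_ne_zero MonomialOrder.degLex hi
  calc 2 * (u i).totalDegree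
      ≤ 2 * (u k).totalDegree := Nat.mul_le_mul_left 2 (degLex_totalDegree_monotone (hmax i))
    _ = (MonomialOrder.degLex.degree (u k) + MonomialOrder.degLex.degree (u k)).degree := by
      rw [map_add, degree_degLexDegree, two_mul]
    _ ≤ (∑ j, u j ^ 2).totalDegree := le_totalDegree (mem_support_iff.2 hk)

theorem totalDegree_le_of_mul_sum_sq_eq_sum_sq {ι : Type*} [Fintype ι] {f : MvPolynomial σ R}
    {u : κ → MvPolynomial σ R} {v : ι → MvPolynomial σ R} {e : ℕ}
    (hv : ∀ j, (v j).totalDegree ≤ e) (h : f * ∑ j, v j ^ 2 = ∑ i, u i ^ 2) (i : κ) :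
    (u i).totalDegree ≤ e + (f.totalDegree + 1) / 2 := by
  have hv' : (∑ j, v j ^ 2).totalDegree ≤ 2 * e := totalDegree_finsetSum_le fun j _ ↦
    (totalDegree_pow _ _).trans (Nat.mul_le_mul_left 2 (hv j))
  have hu : 2 * (u i).totalDegree ≤ f.totalDegree + 2 * e := calc
    2 * (u i).totalDegree
      ≤ (∑ i, u i ^ 2).totalDegree := two_mul_totalDegree_le_totalDegree_sum_sq u i
    _ = (f * ∑ j, v j ^ 2).totalDegree := by rw [h]
    _ ≤ f.totalDegree + (∑ j, v j ^ 2).totalDegree := totalDegree_mul _ _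
    _ ≤ f.totalDegree + 2 * e := Nat.add_le_add_left hv' _
  lia

end SumsOfSquares

open scoped ComplexOrder MatrixOrder Matrix.Norms.L2Operator Matrix in
theorem exists_eq_conjTranspose_mul_self_of_posSemidef {𝕜 ι : Type*} [RCLike 𝕜] [Fintype ι]
    {W : Matrix ι ι 𝕜} (hW : W.PosSemidef) : ∃ B : Matrix ι ι 𝕜, W = Bᴴ * B := by
  classical
  exact CStarAlgebra.nonneg_iff_eq_star_mul_self.1 hW.nonneg

section Gram

variable {R A ι κ : Type*} [Fintype ι] [Fintype κ]

/-- The Gram form `zᵀ W z` of a finite family `z` in an `R`-algebra, linear in the matrix `W`.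
Its values at the positive semidefinite real matrices are the sums of squares of elements of the
span of `z`. -/
noncomputable def gramForm [CommSemiring R] [Semiring A] [Algebra R A] (z : ι → A) :
    Matrix ι ι R →ₗ[R] A :=
  ∑ α, ∑ β, (Matrix.entryLinearMap R R α β).smulRight (z α * z β)

theorem gramForm_apply [CommSemiring R] [Semiring A] [Algebra R A] (z : ι → A)
    (W : Matrix ι ι R) : gramForm z W = ∑ α, ∑ β, W α β • (z α * z β) := by
  simp [gramForm]

open scoped Matrix in
theorem gramForm_transpose_mul_self [CommSemiring R] [Semiring A] [Algebra R A] (z : ι → A)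
    (B : Matrix κ ι R) :
    gramForm z (Bᵀ * B) = ∑ k, Fintype.linearCombination R z (B k) ^ 2 := by
  simp only [gramForm_apply, Fintype.linearCombination_apply, sq, Finset.sum_mul_sum,
    smul_mul_smul_comm, Matrix.mul_apply, Matrix.transpose_apply, Finset.sum_smul]
  rw [Finset.sum_comm_cycle]

theorem exists_posSemidef_gramForm_eq_iff [Semiring A] [Algebra ℝ A] (z : ι → A) {a : A} :
    (∃ W : Matrix ι ι ℝ, W.PosSemidef ∧ gramForm z W = a) ↔
      ∃ (l : ℕ) (u : Fin l → A), (∀ i, u i ∈ Submodule.span ℝ (Set.range z)) ∧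
        ∑ i, u i ^ 2 = a := by
  constructor
  · rintro ⟨W, hW, rfl⟩
    obtain ⟨B, rfl⟩ := exists_eq_conjTranspose_mul_self_of_posSemidef hW
    let enum := Fintype.equivFin ι
    refine ⟨Fintype.card ι, fun i ↦ Fintype.linearCombination ℝ z (B (enum.symm i)),
      fun i ↦ ?_, ?_⟩
    · exact Fintype.range_linearCombination ℝ (v := z) ▸ LinearMap.mem_range_self _ _
    · rw [Matrix.conjTranspose_eq_transpose_of_trivial, gramForm_transpose_mul_self,
        enum.symm.sum_comp fun k ↦ Fintype.linearCombination ℝ z (B k) ^ 2]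
  · rintro ⟨l, u, hu, rfl⟩
    simp only [← Fintype.range_linearCombination ℝ (v := z), LinearMap.mem_range] at hu
    choose B hB using hu
    refine ⟨_, Matrix.posSemidef_conjTranspose_mul_self (Matrix.of B), ?_⟩
    rw [Matrix.conjTranspose_eq_transpose_of_trivial, gramForm_transpose_mul_self]
    exact Finset.sum_congr rfl fun i _ ↦ congrArg (· ^ 2) (hB i)

theorem gramForm_eq_zero_iff_of_posSemidef [Ring A] [IsFormallyReal A] [Algebra ℝ A]
    {z : ι → A} (hz : LinearIndependent ℝ z) {W : Matrix ι ι ℝ} (hW : W.PosSemidef) :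
    gramForm z W = 0 ↔ W = 0 := by
  refine ⟨fun h ↦ ?_, fun h ↦ by rw [h, map_zero]⟩
  obtain ⟨B, rfl⟩ := exists_eq_conjTranspose_mul_self_of_posSemidef hW
  rw [Matrix.conjTranspose_eq_transpose_of_trivial, gramForm_transpose_mul_self] at h
  have hB : B = 0 := funext fun k ↦ hz.fintypeLinearCombination_injective <| by
    rw [eq_zero_of_sum_sq_eq_zero h k]; exact (map_zero _).symm
  rw [hB, mul_zero]

end Gram

section Monomials

variable {σ R ι : Type*} [CommSemiring R] (m : ι → σ →₀ ℕ)

theorem span_range_monomial :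
    Submodule.span R (Set.range fun α ↦ monomial (m α) (1 : R)) =
      restrictSupport R (Set.range m) := by
  rw [restrictSupport_eq_span, ← Set.range_comp, Function.comp_def]

theorem gramForm_monomial [Fintype ι] (W : Matrix ι ι R) :
    gramForm (fun α ↦ monomial (m α) (1 : R)) W =
      ∑ α, ∑ β, monomial (m α + m β) (W α β) := by
  simp [gramForm_apply, monomial_mul, smul_monomial]

variable {m} in
theorem linearIndependent_monomial (hm : Function.Injective m) :
    LinearIndependent R fun α ↦ monomial (m α) (1 : R) := by
  simpa only [coe_basisMonomials, Function.comp_def] using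
    (basisMonomials σ R).linearIndependent.comp m hm

theorem exists_posSemidef_gramForm_monomial_eq_iff [Fintype ι] {p : MvPolynomial σ ℝ} :
    (∃ W : Matrix ι ι ℝ, W.PosSemidef ∧ gramForm (fun α ↦ monomial (m α) (1 : ℝ)) W = p) ↔
      ∃ (l : ℕ) (u : Fin l → MvPolynomial σ ℝ),
        (∀ i, ((u i).support : Set (σ →₀ ℕ)) ⊆ Set.range m) ∧ ∑ i, u i ^ 2 = p := by
  simp only [exists_posSemidef_gramForm_eq_iff, span_range_monomial, mem_restrictSupport_iff]

end Monomials

theorem rsos_iff_exists_gramForm {n e : ℕ} {f : MvPolynomial (Fin n) ℝ}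
    {𝒯 : Finset (Fin n →₀ ℕ)} (h𝒯 : ∀ α ∈ 𝒯, α.degree ≤ e) :
    RSOS n 𝒯 f ↔
      ∃ (W₁ : Matrix (Idx n (e + (f.totalDegree + 1) / 2))
              (Idx n (e + (f.totalDegree + 1) / 2)) ℝ)
        (W₂ : Matrix 𝒯 𝒯 ℝ),
        W₁.PosSemidef ∧ W₂.PosSemidef ∧ W₂ ≠ 0 ∧
        gramForm (fun α ↦ monomial α.1 (1 : ℝ)) W₁ =
          f * gramForm (fun γ ↦ monomial γ.1 (1 : ℝ)) W₂ := by
  have hindep : LinearIndependent ℝ fun γ : 𝒯 ↦ monomial γ.1 (1 : ℝ) :=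
    linearIndependent_monomial Subtype.val_injective
  constructor
  · rintro ⟨l, l', u, v, hv, hne, h⟩
    have hv_deg (j : Fin l') : (v j).totalDegree ≤ e :=
      Finset.sup_le fun α hα ↦ h𝒯 α (hv j hα)
    have hu_deg := totalDegree_le_of_mul_sum_sq_eq_sum_sq hv_deg h
    obtain ⟨W₁, hW₁, hu_gram⟩ := (exists_posSemidef_gramForm_monomial_eq_iff
      (Subtype.val : Idx n (e + (f.totalDegree + 1) / 2) → _)).2
      ⟨l, u, fun i α hα ↦ ⟨⟨α, (le_totalDegree hα).trans (hu_deg i)⟩, rfl⟩, rfl⟩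
    obtain ⟨W₂, hW₂, hv_gram⟩ := (exists_posSemidef_gramForm_monomial_eq_iff
      (Subtype.val : 𝒯 → _)).2 ⟨l', v, fun j α hα ↦ ⟨⟨α, hv j hα⟩, rfl⟩, rfl⟩
    refine ⟨W₁, W₂, hW₁, hW₂, ?_, by rw [hu_gram, hv_gram, h]⟩
    rwa [Ne, ← gramForm_eq_zero_iff_of_posSemidef hindep hW₂, hv_gram]
  · rintro ⟨W₁, W₂, hW₁, hW₂, hne, h⟩
    obtain ⟨l, u, -, hu_gram⟩ :=
      (exists_posSemidef_gramForm_monomial_eq_iff Subtype.val).1 ⟨W₁, hW₁, rfl⟩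
    obtain ⟨l', v, hv, hv_gram⟩ :=
      (exists_posSemidef_gramForm_monomial_eq_iff Subtype.val).1 ⟨W₂, hW₂, rfl⟩
    refine ⟨l, l', u, v, fun j ↦ ?_, ?_, by rw [hu_gram, hv_gram, h]⟩
    · simpa using hv j
    · rwa [hv_gram, Ne, gramForm_eq_zero_iff_of_posSemidef hindep hW₂]

/-- `f ∈ RSOS(𝒯)` iff there are PSD matrices `W¹` (indexed by the
multi-indices of degree `≤ d`, `d = e + ⌈deg f / 2⌉`) and `W²` (indexed by the
exponents of the monomials in `𝒯`) with `trace W² = 1` such that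
`Σ_{α,β} W¹_{α,β} X^{α+β} = f · Σ_{γ,δ} W²_{γ,δ} X^{γ+δ}`. -/
theorem statement0 (n e : ℕ) (f : MvPolynomial (Fin n) ℝ)
    (𝒯 : Finset (Fin n →₀ ℕ)) (h𝒯 : ∀ α ∈ 𝒯, α.degree ≤ e) :
    RSOS n 𝒯 f ↔
      ∃ (W₁ : Matrix (Idx n (e + (f.totalDegree + 1) / 2))
              (Idx n (e + (f.totalDegree + 1) / 2)) ℝ)
        (W₂ : Matrix 𝒯 𝒯 ℝ),
        W₁.PosSemidef ∧ W₂.PosSemidef ∧ W₂.trace = 1 ∧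
        (∑ α, ∑ β, monomial (α.1 + β.1) (W₁ α β)) =
          f * ∑ γ, ∑ δ, monomial (γ.1 + δ.1) (W₂ γ δ) := by
  simp only [rsos_iff_exists_gramForm h𝒯, ← gramForm_monomial]
  constructor
  · rintro ⟨W₁, W₂, hW₁, hW₂, hne, h⟩
    have ht : 0 < W₂.trace := hW₂.trace_nonneg.lt_of_ne' (mt hW₂.trace_eq_zero_iff.1 hne)
    have ht' : 0 ≤ W₂.trace⁻¹ := (inv_pos.2 ht).le
    refine ⟨W₂.trace⁻¹ • W₁, W₂.trace⁻¹ • W₂, hW₁.smul ht', hW₂.smul ht', ?_, ?_⟩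
    · rw [Matrix.trace_smul, smul_eq_mul, inv_mul_cancel₀ ht.ne']
    · rw [map_smul, map_smul, h, mul_smul_comm]
  · rintro ⟨W₁, W₂, hW₁, hW₂, htr, h⟩
    have hne : W₂ ≠ 0 := fun h₀ ↦ by simp [h₀] at htr
    exact ⟨W₁, W₂, hW₁, hW₂, hne, h⟩
end

section
/- (Semidefinite Farkas Lemma.) Let A₁,…,A_l be real symmetric k×k matrices and let b ∈ ℝˡ. Suppose there exists a vector y ∈ ℝˡ such that Σ_{i=1}^l y_i A_i is positive definite. Then exactly one of the following holds: (1) there exists a real symmetric positive semidefinite k×k matrix W such that A_i • W = b_i for all i = 1,…,l; (2) there exists a vector ŷ ∈ ℝˡ such that Σ_{i=1}^l ŷ_i A_i is positive semidefinite and bᵀŷ < 0. -/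
/-!
Condition (1) says that `b` lies in the image of the cone of positive semidefinite matrices under
the map `W ↦ (Aᵢ • W)ᵢ`. A closed convex cone is cut out by the linear functionals that are
nonnegative on it, and the functional `y` is nonnegative on this image exactly when `∑ yᵢ Aᵢ` pairs
nonnegatively with every positive semidefinite matrix, that is, when it is itself positive
semidefinite. So the point is that the image is closed. A positive definite `∑ yᵢ Aᵢ` pairs
strictly positively with every nonzero positive semidefinite matrix, so the map kills no nonzero
element of the cone; by compactness of the unit sphere it is then bounded below on the cone, hence
proper there.
-/

section ImageClosed

variable {E F : Type*} [NormedAddCommGroup E] [NormedSpace ℝ E] [ProperSpace E]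
  [NormedAddCommGroup F] [NormedSpace ℝ F]

theorem exists_pos_mul_norm_le_of_forall_mem_properCone {C : ProperCone ℝ E}
    {L : E →L[ℝ] F} (hL : ∀ x ∈ C, L x = 0 → x = 0) :
    ∃ c > 0, ∀ x ∈ C, c * ‖x‖ ≤ ‖L x‖ := by
  have hcompact : IsCompact (Metric.sphere (0 : E) 1 ∩ C) :=
    (isCompact_sphere 0 1).inter_right C.isClosed
  have hpos : ∀ x ∈ Metric.sphere (0 : E) 1 ∩ C, 0 < ‖L x‖ := fun x ⟨hx, hxC⟩ ↦
    norm_pos_iff.2 fun h ↦ ne_zero_of_mem_unit_sphere ⟨x, hx⟩ (hL x hxC h)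
  obtain ⟨c, hc, hcL⟩ := hcompact.exists_forall_le' L.continuous.norm.continuousOn hpos
  refine ⟨c, hc, fun x hx ↦ ?_⟩
  obtain rfl | hx0 := eq_or_ne x 0
  · simp
  have hunit : ‖x‖⁻¹ • x ∈ Metric.sphere (0 : E) 1 ∩ C :=
    ⟨by simp [norm_smul, hx0], C.smul_mem hx (by positivity)⟩
  have h := hcL _ hunit
  rwa [map_smul, norm_smul, norm_inv, norm_norm, le_inv_mul_iff₀' (norm_pos_iff.2 hx0)] at h

theorem isProperMap_domRestrict_properCone {C : ProperCone ℝ E} {L : E →L[ℝ] F}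
    (hL : ∀ x ∈ C, L x = 0 → x = 0) : IsProperMap ((C : Set E).domRestrict L) := by
  obtain ⟨c, hc, hcL⟩ := exists_pos_mul_norm_le_of_forall_mem_properCone hL
  refine isProperMap_iff_tendsto_cocompact.2
    ⟨L.continuous.comp continuous_subtype_val, .mono_right ?_ Metric.cobounded_le_cocompact⟩
  have hnorm : Filter.Tendsto (fun x : C ↦ ‖(x : E)‖) (.cocompact C) .atTop :=
    tendsto_norm_cocompact_atTop.comp
      C.isClosed.isClosedEmbedding_subtypeVal.tendsto_cocompact
  exact tendsto_norm_atTop_iff_cobounded.1 <|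
    Filter.tendsto_atTop_mono (fun x : C ↦ hcL x x.2) (hnorm.const_mul_atTop hc)

theorem isClosed_image_properCone {C : ProperCone ℝ E} {L : E →L[ℝ] F}
    (hL : ∀ x ∈ C, L x = 0 → x = 0) : IsClosed (L '' C) := by
  simpa only [Set.range_domRestrict] using (isProperMap_domRestrict_properCone hL).isClosed_range

end ImageClosed

section ImageSeparation

variable {E F : Type*} [AddCommGroup E] [Module ℝ E] [TopologicalSpace E]
  [AddCommGroup F] [Module ℝ F] [TopologicalSpace F] [IsTopologicalAddGroup F]
  [ContinuousSMul ℝ F] [LocallyConvexSpace ℝ F]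

theorem mem_image_properCone_iff {C : ProperCone ℝ E} {L : E →L[ℝ] F}
    (hLC : IsClosed (L '' C)) {b : F} :
    b ∈ L '' C ↔ ∀ f : StrongDual ℝ F, (∀ x ∈ C, 0 ≤ f (L x)) → 0 ≤ f b := by
  constructor
  · rintro ⟨x, hx, rfl⟩ f hf
    exact hf x hx
  · intro h
    have hmap : (C.map L : Set F) = L '' C := hLC.closure_eq
    by_contra hb
    rw [← hmap, SetLike.mem_coe] at hb
    obtain ⟨f, hf, hfb⟩ := (C.map L).hyperplane_separation_point hb
    refine hfb.not_ge (h f fun x hx ↦ hf _ ?_)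
    rw [← SetLike.mem_coe, hmap]
    exact Set.mem_image_of_mem L hx

end ImageSeparation

section PosSemidef

open scoped ComplexOrder Matrix

theorem trace_mul_vecMulVec {R m n : Type*} [CommSemiring R] [Fintype m] [Fintype n]
    (M : Matrix m n R) (x : n → R) (y : m → R) :
    (M * Matrix.vecMulVec x y).trace = y ⬝ᵥ M *ᵥ x := by
  rw [Matrix.mul_vecMulVec, Matrix.trace_vecMulVec, dotProduct_comm]

variable {𝕜 n : Type*} [RCLike 𝕜] [Fintype n] {M W : Matrix n n 𝕜}

open scoped MatrixOrder in
theorem exists_eq_conjTranspose_mul_self_of_posSemidef_s2 (hM : M.PosSemidef) :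
    ∃ B : Matrix n n 𝕜, M = Bᴴ * B := by
  classical
  exact CStarAlgebra.nonneg_iff_eq_star_mul_self.mp hM.nonneg

theorem trace_mul_nonneg_of_posSemidef (hM : M.PosSemidef) (hW : W.PosSemidef) :
    0 ≤ (M * W).trace := by
  obtain ⟨B, rfl⟩ := exists_eq_conjTranspose_mul_self_of_posSemidef_s2 hW
  rw [← mul_assoc, Matrix.trace_mul_cycle]
  exact (hM.mul_mul_conjTranspose_same B).trace_nonneg

theorem eq_zero_of_posDef_of_trace_mul_eq_zero (hM : M.PosDef) (hW : W.PosSemidef)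
    (h : (M * W).trace = 0) : W = 0 := by
  obtain ⟨B, rfl⟩ := exists_eq_conjTranspose_mul_self_of_posSemidef_s2 hW
  have hBMB : B * M * Bᴴ = 0 := by
    rwa [← mul_assoc, Matrix.trace_mul_cycle,
      (hM.posSemidef.mul_mul_conjTranspose_same B).trace_eq_zero_iff] at h
  have hker (x : n → 𝕜) : Bᴴ *ᵥ x = 0 := by
    by_contra hx
    refine (hM.dotProduct_mulVec_pos hx).ne' ?_
    calc star (Bᴴ *ᵥ x) ⬝ᵥ M *ᵥ Bᴴ *ᵥ x = star x ⬝ᵥ (B * M * Bᴴ) *ᵥ x := by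
          simp [Matrix.star_mulVec, Matrix.dotProduct_mulVec, Matrix.mul_assoc]
      _ = 0 := by simp [hBMB]
  have hB : Bᴴ = 0 := Matrix.mulVec_injective (funext fun x ↦ by simp [hker x])
  rw [hB, zero_mul]

theorem posSemidef_iff_forall_re_trace_mul_nonneg (hM : M.IsHermitian) :
    M.PosSemidef ↔ ∀ W : Matrix n n 𝕜, W.PosSemidef → 0 ≤ RCLike.re (M * W).trace := by
  refine ⟨fun hpos W hW ↦ (RCLike.nonneg_iff.1 (trace_mul_nonneg_of_posSemidef hpos hW)).1,
    fun h ↦ .of_dotProduct_mulVec_nonneg hM fun x ↦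
      RCLike.nonneg_iff.2 ⟨?_, hM.im_star_dotProduct_mulVec_self x⟩⟩
  rw [← trace_mul_vecMulVec]
  exact h _ (Matrix.posSemidef_vecMulVec_self_star x)

end PosSemidef

section PosSemidefCone

open scoped ComplexOrder

variable {𝕜 n : Type*} [RCLike 𝕜]

theorem isClosed_setOf_posSemidef : IsClosed {W : Matrix n n 𝕜 | W.PosSemidef} := by
  simp only [Matrix.PosSemidef, Set.ofPred_and, Set.ofPred_forall]
  refine (isClosed_eq (by fun_prop) (by fun_prop)).inter
    (isClosed_iInter fun x ↦ isClosed_le continuous_const ?_)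
  exact continuous_finsetSum _ fun i _ ↦ continuous_finsetSum _ fun j _ ↦ by fun_prop

variable (𝕜 n) in
/-- The closed convex cone of positive semidefinite matrices. -/
def posSemidefCone : ProperCone ℝ (Matrix n n 𝕜) where
  carrier := {W | W.PosSemidef}
  zero_mem' := .zero
  add_mem' := .add
  smul_mem' c _ hW := hW.smul c.2
  isClosed' := isClosed_setOf_posSemidef

@[simp]
theorem mem_posSemidefCone {W : Matrix n n 𝕜} : W ∈ posSemidefCone 𝕜 n ↔ W.PosSemidef := .rfl

end PosSemidefCone

section TracePairing

open scoped ComplexOrder Matrix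

variable {𝕜 n ι : Type*} [RCLike 𝕜] [Fintype n]

/-- The map `W ↦ (Aᵢ • W)ᵢ`. Over a general `RCLike` field the scalar product is the real part of
the trace, which is the whole trace on Hermitian matrices. -/
def tracePairing (A : ι → Matrix n n 𝕜) : Matrix n n 𝕜 →L[ℝ] ι → ℝ where
  toFun W i := RCLike.re (A i * W).trace
  map_add' V W := by ext i; simp [Matrix.mul_add]
  map_smul' c W := by ext i; simp [RCLike.smul_re]
  cont := by fun_prop

variable {A : ι → Matrix n n 𝕜}

@[simp]
theorem tracePairing_apply (W : Matrix n n 𝕜) (i : ι) :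
    tracePairing A W i = RCLike.re (A i * W).trace := rfl

variable [Fintype ι]

theorem dotProduct_tracePairing (y : ι → ℝ) (W : Matrix n n 𝕜) :
    y ⬝ᵥ tracePairing A W = RCLike.re ((∑ i, y i • A i) * W).trace := by
  simp [dotProduct, Matrix.sum_mul, Matrix.trace_sum, RCLike.smul_re]

-- Any norm inducing the product topology would do here.
open scoped Matrix.Norms.Elementwise in
theorem isClosed_image_tracePairing_posSemidefCone {y : ι → ℝ} (hy : (∑ i, y i • A i).PosDef) :
    IsClosed (tracePairing A '' posSemidefCone 𝕜 n) := by
  refine isClosed_image_properCone fun W hW (hAW : tracePairing A W = 0) ↦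
    eq_zero_of_posDef_of_trace_mul_eq_zero hy hW ?_
  have hre : RCLike.re ((∑ i, y i • A i) * W).trace = 0 := by
    rw [← dotProduct_tracePairing, hAW, dotProduct_zero]
  have him := (RCLike.nonneg_iff.1 (trace_mul_nonneg_of_posSemidef hy.posSemidef hW)).2
  exact RCLike.ext (by simpa using hre) (by simpa using him)

theorem mem_image_tracePairing_posSemidefCone_iff (hA : ∀ i, (A i).IsHermitian)
    (hclosed : IsClosed (tracePairing A '' posSemidefCone 𝕜 n)) {b : ι → ℝ} :
    b ∈ tracePairing A '' posSemidefCone 𝕜 n ↔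
      ∀ y : ι → ℝ, (∑ i, y i • A i).PosSemidef → 0 ≤ y ⬝ᵥ b := by
  classical
  have hHerm (y : ι → ℝ) : (∑ i, y i • A i).IsHermitian :=
    isSelfAdjoint_sum _ fun i _ ↦ (IsSelfAdjoint.all (y i)).smul (hA i)
  have hdual (y : ι → ℝ) : (∑ i, y i • A i).PosSemidef ↔
      ∀ W ∈ posSemidefCone 𝕜 n, 0 ≤ y ⬝ᵥ tracePairing A W := by
    simp only [posSemidef_iff_forall_re_trace_mul_nonneg (hHerm y), dotProduct_tracePairing,
      mem_posSemidefCone]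
  rw [mem_image_properCone_iff hclosed]
  simp only [hdual]
  exact ((dotProductEquiv ℝ ι).trans LinearMap.toContinuousLinearMap).surjective.forall

end TracePairing

open scoped ComplexOrder in
theorem statement2_general {𝕜 n ι : Type*} [RCLike 𝕜] [Fintype n] [Fintype ι]
    (A : ι → Matrix n n 𝕜) (hA : ∀ i, (A i).IsHermitian) (b : ι → ℝ)
    (hstrict : ∃ y : ι → ℝ, (∑ i, y i • A i).PosDef) :
    Xor (∃ W : Matrix n n 𝕜, W.PosSemidef ∧ ∀ i, RCLike.re (A i * W).trace = b i)
      (∃ y : ι → ℝ, (∑ i, y i • A i).PosSemidef ∧ ∑ i, b i * y i < 0) := by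
  obtain ⟨y, hy⟩ := hstrict
  have hfarkas := mem_image_tracePairing_posSemidefCone_iff hA
    (isClosed_image_tracePairing_posSemidefCone hy) (b := b)
  refine xor_iff_iff_not.2 ?_
  simpa [funext_iff, dotProduct, mul_comm] using hfarkas

/-- Semidefinite Farkas Lemma: if some real linear combination of the
real symmetric matrices `A₁,…,A_l` is positive definite, then exactly one of the
following holds: (1) there is a PSD matrix `W` with `Aᵢ • W = trace(AᵢW) = bᵢ` for
all `i`; (2) there is `ŷ ∈ ℝˡ` with `Σᵢ ŷᵢ Aᵢ ⪰ 0` and `bᵀŷ < 0`. -/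
theorem statement2 (k l : ℕ) (A : Fin l → Matrix (Fin k) (Fin k) ℝ)
    (hA : ∀ i, (A i).IsSymm) (b : Fin l → ℝ)
    (hstrict : ∃ y : Fin l → ℝ, (∑ i, y i • A i).PosDef) :
    Xor'
      (∃ W : Matrix (Fin k) (Fin k) ℝ, W.PosSemidef ∧ ∀ i, (A i * W).trace = b i)
      (∃ yhat : Fin l → ℝ,
        (∑ i, yhat i • A i).PosSemidef ∧ ∑ i, b i * yhat i < 0) := by
  exact statement2_general A (fun i ↦ Matrix.isHermitian_iff_isSymm.2 (hA i)) b hstrict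
end

section
/- Let f ∈ ℚ[X₁,…,Xₙ], let e ≥ 0 be an integer, set d = e + ⌈deg(f)/2⌉, and let 𝒯 be a subset of the set of monomials of total degree ≤ e. Then f ∉ RSOS(𝒯) if and only if the semidefinite program inf { s : M_d(y) ⪰ 0 and M_e((−f)y) + s·I ⪰ 0 } (where y ranges over sequences indexed by multi-indices of degree ≤ 2d, and the localizing matrix M_e((−f)y) has rows and columns indexed by the exponents of the monomials in 𝒯) has optimal value −∞; that is, for every s₀ ∈ ℝ there exist y and s < s₀ with M_d(y) ⪰ 0 and M_e((−f)y) + s·I ⪰ 0. -/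
open MvPolynomial

/-!
Semidefinite programming duality. If `f ∉ RSOS(𝒯)`, then for `supp v ⊆ 𝒯` and `deg u ≤ d` the
expression `∑ (uₖ² - f vₖ²)` vanishes only when all `uₖ` and `vₖ` do. Lifted to Gram matrices, this
says that a linear map does not vanish on the compact convex set of positive semidefinite matrices
of trace one, so Hahn–Banach provides a functional `L_y` which is strictly positive on its image:
the moment matrix of `y` is positive semidefinite and the localizing matrix of `(-f) y` is positive
definite.
Conversely, since leading forms of real squares cannot cancel, the `uᵢ` in a certificate
`f ∑ vⱼ² = ∑ uᵢ²` have degree at most `d`, and such an `L_y` would take opposite signs on the two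
sides. Finally, the matrices are linear in `y`, so scaling `y` turns positive definiteness of the
localizing matrix into arbitrarily negative feasible values of `s`, and feasibility for one `s < 0`
already gives positive definiteness.
-/

lemma exists_linearMap_comp_pos_of_isCompact {E V : Type*} [NormedAddCommGroup E]
    [NormedSpace ℝ E] [FiniteDimensional ℝ E] [AddCommGroup V] [Module ℝ V] {K : Set E}
    (hconv : Convex ℝ K) (hcomp : IsCompact K) (T : E →ₗ[ℝ] V) (hT : ∀ x ∈ K, T x ≠ 0) :
    ∃ Λ : V →ₗ[ℝ] ℝ, ∀ x ∈ K, 0 < Λ (T x) := by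
  have hdisj : Disjoint K (LinearMap.ker T : Set E) := Set.disjoint_left.2 hT
  obtain ⟨φ, a, b, hφK, hab, hφT⟩ := geometric_hahn_banach_compact_closed hconv hcomp
    (LinearMap.ker T).convex (LinearMap.ker T).closed_of_finiteDimensional hdisj
  have hb : b < 0 := by simpa using hφT 0 (zero_mem _)
  have hφ_ker : ∀ x ∈ LinearMap.ker T, φ x = 0 := by
    intro x hx
    by_contra hne
    have h := hφT _ (Submodule.smul_mem _ (b / φ x) hx)
    rw [map_smul, smul_eq_mul, div_mul_cancel₀ _ hne] at h
    exact h.false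
  have hmem : (-φ : E →ₗ[ℝ] ℝ) ∈ LinearMap.range T.dualMap := by
    rw [LinearMap.range_dualMap_eq_dualAnnihilator_ker, Submodule.mem_dualAnnihilator]
    exact fun x hx => by simp [hφ_ker x hx]
  obtain ⟨Λ, hΛ⟩ := hmem
  refine ⟨Λ, fun x hx => ?_⟩
  have hΛx : Λ (T x) = -φ x := LinearMap.congr_fun hΛ x
  linarith [hφK x hx]

section Spectraplex

variable {ι : Type*} [Fintype ι]

variable (ι) in
/-- The spectraplex: positive semidefinite real matrices of trace one, a compact convex base of the
cone of positive semidefinite matrices. -/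
def spectraplex : Set (Matrix ι ι ℝ) := {A | A.PosSemidef ∧ A.trace = 1}

lemma convex_spectraplex : Convex ℝ (spectraplex ι) := by
  rintro A ⟨hA, hA1⟩ B ⟨hB, hB1⟩ a b ha hb hab
  refine ⟨(hA.smul ha).add (hB.smul hb), ?_⟩
  simp [Matrix.trace_add, Matrix.trace_smul, hA1, hB1, hab]

lemma posSemidef_sq_apply_le {ι : Type*} {A : Matrix ι ι ℝ} (hA : A.PosSemidef) (i j : ι) :
    A i j ^ 2 ≤ A i i * A j j := by
  have hdet := (hA.submatrix ![i, j]).det_nonneg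
  have hsymm : A j i = A i j := hA.isHermitian.apply i j
  simp only [Matrix.det_fin_two, Matrix.submatrix_apply, Matrix.cons_val_zero,
    Matrix.cons_val_one, hsymm] at hdet
  linarith

open scoped Matrix.Norms.Elementwise in
lemma isCompact_spectraplex : IsCompact (spectraplex ι) := by
  refine Metric.isCompact_of_isClosed_isBounded ?_ ?_
  · have h : spectraplex ι = {A | A.IsHermitian} ∩ (⋂ x, {A | 0 ≤ star x ⬝ᵥ A.mulVec x}) ∩
        {A | A.trace = 1} := by
      ext A
      simp [spectraplex, Matrix.posSemidef_iff_dotProduct_mulVec]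
    rw [h]
    refine (IsClosed.inter (isClosed_eq ?_ ?_) (isClosed_iInter fun x => isClosed_le ?_ ?_)).inter
      (isClosed_eq ?_ ?_) <;> fun_prop
  · refine isBounded_iff_forall_norm_le.2 ⟨1, fun A ⟨hA, hA1⟩ => ?_⟩
    have hdiag (i : ι) : A i i ≤ 1 := hA1 ▸
      Finset.single_le_sum (f := fun k => A k k) (fun k _ => hA.diag_nonneg) (Finset.mem_univ i)
    refine (Matrix.norm_le_iff zero_le_one).2 fun i j => abs_le_one_iff_mul_self_le_one.2 ?_
    calc A i j * A i j = A i j ^ 2 := (sq _).symm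
      _ ≤ A i i * A j j := posSemidef_sq_apply_le hA i j
      _ ≤ 1 := mul_le_one₀ (hdiag i) hA.diag_nonneg (hdiag j)

open scoped Matrix.Norms.Elementwise in
lemma exists_linearMap_comp_pos_of_posSemidef {ι V : Type*} [Finite ι] [AddCommGroup V]
    [Module ℝ V] (T : Matrix ι ι ℝ →ₗ[ℝ] V)
    (hT : ∀ A : Matrix ι ι ℝ, A.PosSemidef → T A = 0 → A = 0) :
    ∃ Λ : V →ₗ[ℝ] ℝ, ∀ A : Matrix ι ι ℝ, A.PosSemidef → A ≠ 0 → 0 < Λ (T A) := by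
  cases nonempty_fintype ι
  have hT_ne : ∀ A ∈ spectraplex ι, T A ≠ 0 := by
    rintro A ⟨hA, hA1⟩ hTA
    simp [hT A hA hTA] at hA1
  obtain ⟨Λ, hΛ⟩ :=
    exists_linearMap_comp_pos_of_isCompact convex_spectraplex isCompact_spectraplex T hT_ne
  refine ⟨Λ, fun A hA hA0 => ?_⟩
  have htr : 0 < A.trace := hA.trace_nonneg.lt_of_ne' (hA0 ∘ hA.trace_eq_zero_iff.1)
  have hpos := hΛ (A.trace⁻¹ • A)
    ⟨hA.smul (inv_nonneg.2 htr.le), by simp [Matrix.trace_smul, htr.ne']⟩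
  rw [map_smul, map_smul, smul_eq_mul] at hpos
  exact pos_of_mul_pos_right hpos (inv_nonneg.2 htr.le)

end Spectraplex

section Bilinear

variable {ι E V : Type*} [Fintype ι] [AddCommGroup E] [Module ℝ E] [AddCommGroup V] [Module ℝ V]

/-- The linear extension `A ↦ ∑ A i j • B (b i) (b j)` of a bilinear map `B` to matrices, which
linearises `x ↦ B x x`: it sends the Gram matrix `c cᵀ` of the coordinates `c` of `x` to `B x x`. -/
noncomputable def gramMap (b : Module.Basis ι ℝ E) (B : E →ₗ[ℝ] E →ₗ[ℝ] V) :
    Matrix ι ι ℝ →ₗ[ℝ] V :=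
  ∑ i, ∑ j, (Matrix.entryLinearMap ℝ ℝ i j).smulRight (B (b i) (b j))

lemma gramMap_vecMulVec (b : Module.Basis ι ℝ E) (B : E →ₗ[ℝ] E →ₗ[ℝ] V) (c : ι → ℝ) :
    gramMap b B (Matrix.vecMulVec c c) = B (b.equivFun.symm c) (b.equivFun.symm c) := by
  simp only [Module.Basis.equivFun_symm_apply, LinearMap.map_sum₂, LinearMap.map_smul₂]
  simp only [gramMap, LinearMap.sum_apply, LinearMap.smulRight_apply, Matrix.entryLinearMap_apply,
    Matrix.vecMulVec_apply, mul_smul, map_sum, map_smul, Finset.smul_sum]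

lemma exists_linearMap_apply_self_pos [Module.Finite ℝ E] (B : E →ₗ[ℝ] E →ₗ[ℝ] V)
    (hB : ∀ (m : ℕ) (x : Fin m → E), ∑ k, B (x k) (x k) = 0 → x = 0) :
    ∃ Λ : V →ₗ[ℝ] ℝ, ∀ x ≠ 0, 0 < Λ (B x x) := by
  let b := Module.finBasis ℝ E
  have hker : ∀ A : Matrix _ _ ℝ, A.PosSemidef → gramMap b B A = 0 → A = 0 := by
    intro A hA hBA
    obtain ⟨m, c, rfl⟩ := Matrix.posSemidef_iff_eq_sum_vecMulVec.1 hA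
    simp only [star_trivial, map_sum, gramMap_vecMulVec] at hBA
    have hc (k : Fin m) : c k = 0 := b.equivFun.symm.map_eq_zero_iff.1 (congrFun (hB m _ hBA) k)
    simp [hc]
  obtain ⟨Λ, hΛ⟩ := exists_linearMap_comp_pos_of_posSemidef (gramMap b B) hker
  refine ⟨Λ, fun x hx => ?_⟩
  have hpos := hΛ _ (Matrix.posSemidef_vecMulVec_self_star (b.equivFun x)) (by simpa using hx)
  rwa [star_trivial, gramMap_vecMulVec, LinearEquiv.symm_apply_apply] at hpos

end Bilinear

open scoped MatrixOrder Matrix.Norms.L2Operator in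
lemma exists_pos_sub_smul_one_posSemidef {ι : Type*} [Finite ι] [DecidableEq ι]
    {A : Matrix ι ι ℝ} (hA : A.PosDef) :
    ∃ c : ℝ, 0 < c ∧ (A - c • (1 : Matrix ι ι ℝ)).PosSemidef := by
  cases nonempty_fintype ι
  rcases subsingleton_or_nontrivial (Matrix ι ι ℝ) with _ | _
  · exact ⟨1, one_pos, Subsingleton.elim 0 (A - _) ▸ .zero⟩
  · simpa [Matrix.le_iff, Algebra.algebraMap_eq_smul_one] using
      (CFC.exists_pos_algebraMap_le_iff hA.isHermitian).2
        fun _ => hA.isStrictlyPositive.spectrum_pos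

lemma sum_sq_eq_zero_iff {σ ι : Type*} [Fintype ι] {u : ι → MvPolynomial σ ℝ} :
    ∑ i, u i ^ 2 = 0 ↔ ∀ i, u i = 0 := by
  refine ⟨fun h i => MvPolynomial.funext fun x => ?_, fun h => by simp [h]⟩
  have hx : ∑ j, eval x (u j) ^ 2 = 0 := by simpa using congrArg (eval x) h
  simpa using (Finset.sum_eq_zero_iff_of_nonneg fun j _ => sq_nonneg _).1 hx i (Finset.mem_univ i)

lemma homogeneousComponent_mul_of_totalDegree_le {σ R : Type*} [CommSemiring R]
    {p q : MvPolynomial σ R} {m n : ℕ} (hp : p.totalDegree ≤ m) (hq : q.totalDegree ≤ n) :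
    homogeneousComponent (m + n) (p * q) =
      homogeneousComponent m p * homogeneousComponent n q := by
  classical
  ext α
  have hdeg : ∀ βγ ∈ Finset.HasAntidiagonal.antidiagonal α,
      βγ.1.degree + βγ.2.degree = α.degree := by
    intro βγ h
    rw [← map_add, Finset.HasAntidiagonal.mem_antidiagonal.1 h]
  have hp_zero (β : σ →₀ ℕ) (h : m < β.degree) : p.coeff β = 0 :=
    coeff_eq_zero_of_totalDegree_lt (hp.trans_lt h)
  have hq_zero (γ : σ →₀ ℕ) (h : n < γ.degree) : q.coeff γ = 0 :=
    coeff_eq_zero_of_totalDegree_lt (hq.trans_lt h)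
  simp only [coeff_homogeneousComponent, coeff_mul]
  split_ifs with hα
  · exact Finset.sum_congr rfl fun βγ h => by grind
  · exact (Finset.sum_eq_zero fun βγ h => by grind).symm

lemma exists_mem_support_degree_eq_totalDegree {σ R : Type*} [CommSemiring R]
    {p : MvPolynomial σ R} (hp : p ≠ 0) : ∃ α ∈ p.support, α.degree = p.totalDegree := by
  obtain ⟨α, hα, h⟩ := p.support.exists_mem_eq_sup (support_nonempty.2 hp) Finsupp.degree
  exact ⟨α, hα, h.symm⟩

lemma two_mul_totalDegree_le_of_sum_sq {σ ι : Type*} [Fintype ι] (u : ι → MvPolynomial σ ℝ)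
    (i : ι) : 2 * (u i).totalDegree ≤ (∑ j, u j ^ 2).totalDegree := by
  have : Nonempty ι := ⟨i⟩
  obtain ⟨k, hk⟩ := Finite.exists_max fun j => (u j).totalDegree
  refine (Nat.mul_le_mul_left 2 (hk i)).trans ?_
  by_contra! hlt
  have hsum : ∑ j, homogeneousComponent (u k).totalDegree (u j) ^ 2 = 0 := by
    rw [two_mul] at hlt
    simpa only [map_sum, sq, homogeneousComponent_mul_of_totalDegree_le (hk _) (hk _)] using
      homogeneousComponent_eq_zero _ _ hlt
  have htop := sum_sq_eq_zero_iff.1 hsum k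
  have hne : u k ≠ 0 := fun h => by simp [h] at hlt
  obtain ⟨α, hα, hdeg⟩ := exists_mem_support_degree_eq_totalDegree hne
  refine mem_support_iff.1 hα ?_
  simpa [coeff_homogeneousComponent, hdeg] using congrArg (coeff α) htop

section RieszFunctional

variable {σ : Type*}

/-- The Riesz functional `L_y` of a sequence `y`, sending `X^α` to `y α`; every linear functional on
polynomials arises in this way. -/
noncomputable def rieszFunctional : ((σ →₀ ℕ) → ℝ) ≃ₗ[ℝ] (MvPolynomial σ ℝ →ₗ[ℝ] ℝ) :=
  (basisMonomials σ ℝ).constr ℝ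

lemma rieszFunctional_mul_monomial (y : (σ →₀ ℕ) → ℝ) (q : MvPolynomial σ ℝ) (α : σ →₀ ℕ) :
    rieszFunctional y (q * monomial α 1) = ∑ γ ∈ q.support, q.coeff γ * y (γ + α) := by
  have hmonomial (β : σ →₀ ℕ) : rieszFunctional y (monomial β 1) = y β :=
    (basisMonomials σ ℝ).constr_basis ℝ y β
  conv_lhs => rw [q.as_sum, Finset.sum_mul, map_sum]
  refine Finset.sum_congr rfl fun γ _ => ?_
  rw [monomial_mul, mul_one, ← hmonomial, ← smul_eq_mul, ← map_smul, smul_monomial,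
    smul_eq_mul, mul_one]

/-- The bilinear map `(p, p') ↦ q p p'`, whose diagonal values are the weighted squares `q p²`. -/
noncomputable def weightedMul (q : MvPolynomial σ ℝ) :
    MvPolynomial σ ℝ →ₗ[ℝ] MvPolynomial σ ℝ →ₗ[ℝ] MvPolynomial σ ℝ :=
  (LinearMap.mul ℝ _).compr₂ (LinearMap.mulLeft ℝ q)

lemma weightedMul_apply_self (q p : MvPolynomial σ ℝ) : weightedMul q p p = q * p ^ 2 := by
  simp [weightedMul, sq]

/-- The bilinear form `(p, p') ↦ L_y (q p p')` on the polynomials supported on `S`, whose matrix in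
the monomial basis is the localizing moment matrix of `q y`. -/
noncomputable def localizingForm (S : Set (σ →₀ ℕ)) (q : MvPolynomial σ ℝ) (y : (σ →₀ ℕ) → ℝ) :
    LinearMap.BilinForm ℝ (restrictSupport ℝ S) :=
  LinearMap.BilinForm.restrict ((weightedMul q).compr₂ (rieszFunctional y)) (restrictSupport ℝ S)

lemma localizingForm_apply_self (S : Set (σ →₀ ℕ)) (q : MvPolynomial σ ℝ) (y : (σ →₀ ℕ) → ℝ) (p) :
    localizingForm S q y p p = rieszFunctional y (q * p ^ 2) :=
  congrArg (rieszFunctional y) (weightedMul_apply_self q p)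

lemma localizingForm_isSymm (S : Set (σ →₀ ℕ)) (q : MvPolynomial σ ℝ) (y : (σ →₀ ℕ) → ℝ) :
    (localizingForm S q y).IsSymm :=
  ⟨fun p p' => by simp [localizingForm, weightedMul, mul_comm]⟩

lemma coe_basisRestrictSupport (S : Set (σ →₀ ℕ)) (α : S) :
    (basisRestrictSupport ℝ S α : MvPolynomial σ ℝ) = monomial α 1 := by
  have h : basisRestrictSupport ℝ S α =
      ⟨monomial α 1, (monomial_mem_restrictSupport ℝ).2 (.inl α.2)⟩ := by
    rw [Module.Basis.apply_eq_iff]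
    classical
    ext β
    change (monomial α.1 (1 : ℝ)).coeff β = _
    rw [coeff_monomial, Finsupp.single_apply]
    simp [Subtype.ext_iff]
  rw [h]

/-- The localizing moment matrix of `q y` with rows and columns indexed by the exponents in `S`;
`q = 1` gives the moment matrix. -/
noncomputable def localizingMatrix (S : Set (σ →₀ ℕ)) (q : MvPolynomial σ ℝ) (y : (σ →₀ ℕ) → ℝ) :
    Matrix S S ℝ :=
  fun α β => ∑ γ ∈ q.support, q.coeff γ * y (γ + α + β)

lemma toMatrix_localizingForm (S : Set (σ →₀ ℕ)) [Fintype S] [DecidableEq S]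
    (q : MvPolynomial σ ℝ) (y : (σ →₀ ℕ) → ℝ) :
    (localizingForm S q y).toMatrix (basisRestrictSupport ℝ S) = localizingMatrix S q y := by
  ext α β
  simp [localizingForm, weightedMul, coe_basisRestrictSupport, localizingMatrix,
    ← rieszFunctional_mul_monomial, add_assoc]

lemma localizingMatrix_posSemidef_iff (S : Set (σ →₀ ℕ)) [Finite S]
    (q : MvPolynomial σ ℝ) (y : (σ →₀ ℕ) → ℝ) :
    (localizingMatrix S q y).PosSemidef ↔
      ∀ p ∈ restrictSupport ℝ S, 0 ≤ rieszFunctional y (q * p ^ 2) := by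
  classical
  cases nonempty_fintype S
  rw [← toMatrix_localizingForm]
  refine (LinearMap.isPosSemidef_iff_posSemidef_toMatrix (basisRestrictSupport ℝ S)).symm.trans ?_
  have hsymm : LinearMap.IsSymm (localizingForm S q y) := ⟨(localizingForm_isSymm S q y).eq⟩
  simp only [LinearMap.isPosSemidef_def, and_iff_right hsymm, LinearMap.isNonneg_def]
  refine (SetLike.forall).trans (forall₂_congr fun p hp => ?_)
  rw [← localizingForm_apply_self S q y ⟨p, hp⟩]

lemma localizingMatrix_posDef_iff (S : Set (σ →₀ ℕ)) [Finite S]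
    (q : MvPolynomial σ ℝ) (y : (σ →₀ ℕ) → ℝ) :
    (localizingMatrix S q y).PosDef ↔
      ∀ p ∈ restrictSupport ℝ S, p ≠ 0 → 0 < rieszFunctional y (q * p ^ 2) := by
  classical
  cases nonempty_fintype S
  rw [← toMatrix_localizingForm,
    ← LinearMap.BilinForm.posDef_toQuadraticMap_iff_matrix _ _ (localizingForm_isSymm S q y)]
  simp only [QuadraticMap.PosDef, LinearMap.BilinMap.toQuadraticMap_apply,
    localizingForm_apply_self, SetLike.forall, ne_eq, Submodule.mk_eq_zero]

end RieszFunctional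

lemma momentMatrix_smul {n d : ℕ} (t : ℝ) (y : (Fin n →₀ ℕ) → ℝ) :
    momentMatrix n d (t • y) = t • momentMatrix n d y := rfl

lemma locMomentMatrixOn_smul {n : ℕ} {𝒯 : Finset (Fin n →₀ ℕ)} {q : MvPolynomial (Fin n) ℝ}
    (t : ℝ) (y : (Fin n →₀ ℕ) → ℝ) :
    locMomentMatrixOn n 𝒯 q (t • y) = t • locMomentMatrixOn n 𝒯 q y := by
  ext α β
  simp [locMomentMatrixOn, Finset.mul_sum, mul_left_comm]

lemma momentMatrix_posSemidef_iff {n t : ℕ} {y : (Fin n →₀ ℕ) → ℝ} :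
    (momentMatrix n t y).PosSemidef ↔
      ∀ p ∈ restrictTotalDegree (Fin n) ℝ t, 0 ≤ rieszFunctional y (p ^ 2) := by
  have hM : momentMatrix n t y = localizingMatrix {α | α.degree ≤ t} 1 y := by
    ext α β
    classical
    simp [momentMatrix, localizingMatrix, support_one]
  have : Finite {α : Fin n →₀ ℕ | α.degree ≤ t} := inferInstanceAs (Finite (Idx n t))
  have hpsd := localizingMatrix_posSemidef_iff {α | α.degree ≤ t} 1 y
  simp only [one_mul] at hpsd
  exact hM ▸ hpsd

lemma locMomentMatrixOn_posDef_iff {n : ℕ} {𝒯 : Finset (Fin n →₀ ℕ)}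
    {q : MvPolynomial (Fin n) ℝ} {y : (Fin n →₀ ℕ) → ℝ} :
    (locMomentMatrixOn n 𝒯 q y).PosDef ↔
      ∀ p ∈ restrictSupport ℝ (𝒯 : Set (Fin n →₀ ℕ)), p ≠ 0 →
        0 < rieszFunctional y (q * p ^ 2) :=
  localizingMatrix_posDef_iff (𝒯 : Set (Fin n →₀ ℕ)) q y

lemma exists_linearMap_pos_of_sum_sq {σ : Type*} (V U : Submodule ℝ (MvPolynomial σ ℝ))
    [Module.Finite ℝ V] [Module.Finite ℝ U] (f : MvPolynomial σ ℝ)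
    (h : ∀ (m : ℕ) (v u : Fin m → MvPolynomial σ ℝ), (∀ k, v k ∈ V) → (∀ k, u k ∈ U) →
      f * ∑ k, v k ^ 2 = ∑ k, u k ^ 2 → ∑ k, v k ^ 2 = 0) :
    ∃ Λ : MvPolynomial σ ℝ →ₗ[ℝ] ℝ,
      (∀ u ∈ U, 0 ≤ Λ (u ^ 2)) ∧ ∀ v ∈ V, v ≠ 0 → 0 < Λ (-f * v ^ 2) := by
  let B : (V × U) →ₗ[ℝ] (V × U) →ₗ[ℝ] MvPolynomial σ ℝ :=
    (weightedMul (-f)).compl₁₂ (V.subtype ∘ₗ .fst ℝ V U) (V.subtype ∘ₗ .fst ℝ V U) +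
      (weightedMul 1).compl₁₂ (U.subtype ∘ₗ .snd ℝ V U) (U.subtype ∘ₗ .snd ℝ V U)
  have hB_apply (x : V × U) :
      B x x = -f * (x.1 : MvPolynomial σ ℝ) ^ 2 + (x.2 : MvPolynomial σ ℝ) ^ 2 := by
    simp [B, weightedMul_apply_self]
  obtain ⟨Λ, hΛ⟩ := exists_linearMap_apply_self_pos B fun m x hx => by
    have hfv : f * ∑ k, ((x k).1 : MvPolynomial σ ℝ) ^ 2 =
        ∑ k, ((x k).2 : MvPolynomial σ ℝ) ^ 2 := by
      simp only [hB_apply, Finset.sum_add_distrib, ← Finset.mul_sum] at hx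
      linear_combination -hx
    have hv := h m _ _ (fun k => (x k).1.2) (fun k => (x k).2.2) hfv
    have hu : ∑ k, ((x k).2 : MvPolynomial σ ℝ) ^ 2 = 0 := by rw [← hfv, hv, mul_zero]
    exact funext fun k => Prod.ext (Subtype.ext (sum_sq_eq_zero_iff.1 hv k))
      (Subtype.ext (sum_sq_eq_zero_iff.1 hu k))
  simp only [hB_apply] at hΛ
  refine ⟨Λ, fun u hu => ?_, fun v hv hv0 => ?_⟩
  · rcases eq_or_ne u 0 with rfl | hu0
    · simp
    · simpa using (hΛ (0, ⟨u, hu⟩) (by simpa using hu0)).le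
  · simpa using hΛ (⟨v, hv⟩, 0) (by simpa using hv0)

lemma exists_linearMap_pos_of_not_rsos {n d : ℕ} {𝒯 : Finset (Fin n →₀ ℕ)}
    {f : MvPolynomial (Fin n) ℝ} (hf : ¬ RSOS n 𝒯 f) :
    ∃ Λ : MvPolynomial (Fin n) ℝ →ₗ[ℝ] ℝ,
      (∀ u ∈ restrictTotalDegree (Fin n) ℝ d, 0 ≤ Λ (u ^ 2)) ∧
        ∀ v ∈ restrictSupport ℝ (𝒯 : Set (Fin n →₀ ℕ)), v ≠ 0 → 0 < Λ (-f * v ^ 2) := by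
  have : Module.Finite ℝ (restrictSupport ℝ (𝒯 : Set (Fin n →₀ ℕ))) :=
    .of_basis (basisRestrictSupport ℝ _)
  refine exists_linearMap_pos_of_sum_sq _ _ f fun m v u hv _ huv => ?_
  by_contra hne
  exact hf ⟨m, m, u, v, fun k => Finset.coe_subset.1 (hv k), hne, huv⟩

lemma totalDegree_mul_sq_le {σ : Type*} {d : ℕ} {𝒯 : Finset (σ →₀ ℕ)}
    {f v : MvPolynomial σ ℝ} (hd : ∀ α ∈ 𝒯, f.totalDegree + 2 * α.degree ≤ 2 * d)
    (hv : v.support ⊆ 𝒯) : (f * v ^ 2).totalDegree ≤ 2 * d := by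
  rcases eq_or_ne v 0 with rfl | hv0
  · simp
  obtain ⟨α, hα, hdeg⟩ := exists_mem_support_degree_eq_totalDegree hv0
  calc (f * v ^ 2).totalDegree ≤ f.totalDegree + (v ^ 2).totalDegree := totalDegree_mul _ _
    _ ≤ f.totalDegree + 2 * α.degree := by grw [totalDegree_pow, ← hdeg]
    _ ≤ 2 * d := hd α (hv hα)

lemma not_rsos_of_linearMap_pos {n d : ℕ} {𝒯 : Finset (Fin n →₀ ℕ)}
    {f : MvPolynomial (Fin n) ℝ} (hd : ∀ α ∈ 𝒯, f.totalDegree + 2 * α.degree ≤ 2 * d)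
    {Λ : MvPolynomial (Fin n) ℝ →ₗ[ℝ] ℝ}
    (hΛ : ∀ u ∈ restrictTotalDegree (Fin n) ℝ d, 0 ≤ Λ (u ^ 2))
    (hΛf : ∀ v ∈ restrictSupport ℝ (𝒯 : Set (Fin n →₀ ℕ)), v ≠ 0 → 0 < Λ (-f * v ^ 2)) :
    ¬ RSOS n 𝒯 f := by
  rintro ⟨l, l', u, v, hv, hne, huv⟩
  have hdeg (i : Fin l) : u i ∈ restrictTotalDegree (Fin n) ℝ d := by
    have hsum : (∑ i, u i ^ 2).totalDegree ≤ 2 * d := by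
      rw [← huv, Finset.mul_sum]
      exact totalDegree_finsetSum_le fun j _ => totalDegree_mul_sq_le hd (hv j)
    rw [mem_restrictTotalDegree]
    have := two_mul_totalDegree_le_of_sum_sq u i
    lia
  have hnonneg : 0 ≤ ∑ i, Λ (u i ^ 2) := Finset.sum_nonneg fun i _ => hΛ _ (hdeg i)
  have hpos : 0 < ∑ j, Λ (-f * v j ^ 2) := by
    obtain ⟨j₀, hj₀⟩ := not_forall.1 (mt sum_sq_eq_zero_iff.2 hne)
    refine Finset.sum_pos' (fun j _ => ?_)
      ⟨j₀, Finset.mem_univ _, hΛf _ (Finset.coe_subset.2 (hv j₀)) hj₀⟩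
    rcases eq_or_ne (v j) 0 with hj | hj
    · simp [hj]
    · exact (hΛf _ (Finset.coe_subset.2 (hv j)) hj).le
  rw [← map_sum, ← Finset.mul_sum, neg_mul, huv, map_neg, map_sum] at hpos
  linarith

lemma not_rsos_iff_exists_posSemidef_posDef {n d : ℕ} {𝒯 : Finset (Fin n →₀ ℕ)}
    {f : MvPolynomial (Fin n) ℝ} (hd : ∀ α ∈ 𝒯, f.totalDegree + 2 * α.degree ≤ 2 * d) :
    ¬ RSOS n 𝒯 f ↔ ∃ y : (Fin n →₀ ℕ) → ℝ,
      (momentMatrix n d y).PosSemidef ∧ (locMomentMatrixOn n 𝒯 (-f) y).PosDef := by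
  simp only [momentMatrix_posSemidef_iff, locMomentMatrixOn_posDef_iff]
  rw [← rieszFunctional.surjective.exists
    (p := fun Λ => (∀ u ∈ _, 0 ≤ Λ (u ^ 2)) ∧ ∀ v ∈ _, v ≠ 0 → 0 < Λ (-f * v ^ 2))]
  exact ⟨exists_linearMap_pos_of_not_rsos, fun ⟨_, hΛ, hΛf⟩ => not_rsos_of_linearMap_pos hd hΛ hΛf⟩

lemma forall_exists_lt_posSemidef_add_smul_one_iff {W ι κ : Type*} [SMul ℝ W]
    [Finite κ] [DecidableEq κ] {M : W → Matrix ι ι ℝ} {N : W → Matrix κ κ ℝ}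
    (hM : ∀ (t : ℝ) (y : W), M (t • y) = t • M y)
    (hN : ∀ (t : ℝ) (y : W), N (t • y) = t • N y) :
    (∀ s₀ : ℝ, ∃ (y : W) (s : ℝ), s < s₀ ∧ (M y).PosSemidef ∧
      (N y + s • (1 : Matrix κ κ ℝ)).PosSemidef) ↔
    ∃ y, (M y).PosSemidef ∧ (N y).PosDef := by
  cases nonempty_fintype κ
  constructor
  · intro h
    obtain ⟨y, s, hs, hMy, hNy⟩ := h 0
    have hone : (-s • (1 : Matrix κ κ ℝ)).PosDef := Matrix.PosDef.one.smul (neg_pos.2 hs)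
    exact ⟨y, hMy, by simpa using hone.posSemidef_add hNy⟩
  · rintro ⟨y, hMy, hNy⟩ s₀
    obtain ⟨c, hc, hcN⟩ := exists_pos_sub_smul_one_posSemidef hNy
    let t := (|s₀| + 1) / c
    have ht : 0 ≤ t := by positivity
    refine ⟨t • y, -(|s₀| + 1), by linarith [neg_abs_le s₀], hM t y ▸ hMy.smul ht, ?_⟩
    convert hcN.smul ht using 1
    rw [hN, smul_sub, smul_smul, div_mul_cancel₀ _ hc.ne', neg_smul, sub_eq_add_neg]

theorem statement5_general {n d : ℕ} {f : MvPolynomial (Fin n) ℝ} {𝒯 : Finset (Fin n →₀ ℕ)}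
    (hd : ∀ α ∈ 𝒯, f.totalDegree + 2 * α.degree ≤ 2 * d) :
    ¬ RSOS n 𝒯 f ↔
      ∀ s₀ : ℝ, ∃ (y : (Fin n →₀ ℕ) → ℝ) (s : ℝ), s < s₀ ∧
        (momentMatrix n d y).PosSemidef ∧
        (locMomentMatrixOn n 𝒯 (-f) y + s • (1 : Matrix 𝒯 𝒯 ℝ)).PosSemidef := by
  rw [not_rsos_iff_exists_posSemidef_posDef hd]
  exact (forall_exists_lt_posSemidef_add_smul_one_iff momentMatrix_smul
    locMomentMatrixOn_smul).symm

/-- with `d = e + ⌈deg f / 2⌉`, `f ∉ RSOS(𝒯)` iff the SDP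
`inf { s : M_d(y) ⪰ 0, M_e((−f)y) + s·I ⪰ 0 }` has optimal value `−∞`, i.e. for
every `s₀ ∈ ℝ` there are `y` and `s < s₀` with `M_d(y) ⪰ 0` and
`M_e((−f)y) + s·I ⪰ 0` (the localizing matrix being indexed by the exponents of
the monomials in `𝒯`). -/
theorem statement5 (n e : ℕ) (f : MvPolynomial (Fin n) ℝ)
    (𝒯 : Finset (Fin n →₀ ℕ)) (h𝒯 : ∀ α ∈ 𝒯, α.degree ≤ e) :
    ¬ RSOS n 𝒯 f ↔
      ∀ s₀ : ℝ, ∃ (y : (Fin n →₀ ℕ) → ℝ) (s : ℝ), s < s₀ ∧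
        (momentMatrix n (e + (f.totalDegree + 1) / 2) y).PosSemidef ∧
        (locMomentMatrixOn n 𝒯 (-f) y + s • (1 : Matrix 𝒯 𝒯 ℝ)).PosSemidef := by
  exact statement5_general fun α hα => by
    have := h𝒯 α hα
    lia
end

section
/- (Reznick's Newton polytope theorem.) For a real polynomial p ∈ ℝ[X₁,…,Xₙ], let C(p) ⊆ ℝⁿ denote the convex hull of the exponent vectors of the monomials appearing in p with nonzero coefficient. Then: (i) C(p²) = 2·C(p) (the image of C(p) under scaling by 2); (ii) if f and g are polynomials that are nonnegative on all of ℝⁿ, then C(f) ⊆ C(f+g); (iii) if f = Σ_j g_j² is a sum of squares of polynomials g_j, then C(g_j) ⊆ ½·C(f) for every j. -/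
open MvPolynomial Pointwise

/-- The Newton polytope `C(p)` of a polynomial `p`: the convex hull in `ℝⁿ` of the
exponent vectors of the monomials appearing in `p` with nonzero coefficient. -/
noncomputable def newtonPolytope (n : ℕ) (p : MvPolynomial (Fin n) ℝ) :
    Set (Fin n → ℝ) :=
  convexHull ℝ ((fun α : Fin n →₀ ℕ => fun i => (α i : ℝ)) '' ↑p.support)

/-!
The support function of `C(p)` in a direction `w` is the `w`-weighted degree of `p`, and this degree
is visible in the values of `p`: along the weighted dilations `xᵢ ↦ exp (t wᵢ) xᵢ`, the leading
weighted homogeneous component dominates, so that `p` has weighted degree at most `c` if and only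
if it is `O(exp (c t))` on every orbit. Hence pointwise bounds between polynomials become inclusions
between their Newton polytopes, and squaring `p` doubles all rates of growth.
-/

open Filter Asymptotics Topology

section ConvexHull

variable {E : Type*} [AddCommGroup E] [Module ℝ E] [TopologicalSpace E]
  [IsTopologicalAddGroup E] [ContinuousSMul ℝ E] [LocallyConvexSpace ℝ E]

lemma mem_closedConvexHull_iff_forall_dual_le {s : Set E} {x : E} :
    x ∈ closedConvexHull ℝ s ↔
      ∀ (φ : StrongDual ℝ E) (c : ℝ), (∀ y ∈ s, φ y ≤ c) → φ x ≤ c := by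
  constructor
  · intro hx φ c hc
    exact closedConvexHull_min (t := {y | φ y ≤ c}) hc
      (convex_halfSpace_le φ.toLinearMap.isLinear c)
      (isClosed_le φ.continuous continuous_const) hx
  · contrapose!
    intro hx
    obtain ⟨φ, c, hs, hφx⟩ :=
      geometric_hahn_banach_closed_point convex_closedConvexHull isClosed_closedConvexHull hx
    exact ⟨φ, c, fun y hy => (hs y (subset_closedConvexHull hy)).le, hφx⟩

end ConvexHull

section WeightedDegree

variable {σ : Type*} {w : σ → ℝ} {p : MvPolynomial σ ℝ} {c m : ℝ}

lemma weightedTotalDegree'_le_coe_iff :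
    weightedTotalDegree' w p ≤ c ↔ ∀ α ∈ p.support, Finsupp.weight w α ≤ c := by
  simp only [weightedTotalDegree', Finset.sup_le_iff, WithBot.coe_le_coe]

lemma weightedHomogeneousComponent_ne_zero_of_weightedTotalDegree'_eq
    (h : weightedTotalDegree' w p = m) : weightedHomogeneousComponent w m p ≠ 0 := by
  have hp : p.support.Nonempty := by
    rw [Finset.nonempty_iff_ne_empty, Ne, support_eq_empty]
    rintro rfl
    simp [weightedTotalDegree'_zero] at h
  obtain ⟨α, hα, hαm⟩ := p.support.exists_mem_eq_sup hp fun α => (Finsupp.weight w α : WithBot ℝ)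
  have hweight : Finsupp.weight w α = m := WithBot.coe_injective (hαm.symm.trans h)
  rw [ne_zero_iff]
  exact ⟨α, by rwa [coeff_weightedHomogeneousComponent, if_pos hweight, ← mem_support_iff]⟩

/-- The one-parameter group of weighted dilations of `ℝ^σ` with weights `w`, under which weighted
homogeneous polynomials of degree `m` scale by `exp (t * m)`. The parameter `t` is the logarithm of
the scaling factor, so that the group law is additive in `t`. -/
noncomputable def weightedDilation (w : σ → ℝ) (t : ℝ) (x : σ → ℝ) : σ → ℝ :=
  fun i => Real.exp (t * w i) * x i

lemma eval_weightedDilation_monomial (t : ℝ) (x : σ → ℝ) (α : σ →₀ ℕ) (a : ℝ) :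
    eval (weightedDilation w t x) (monomial α a) =
      Real.exp (t * Finsupp.weight w α) * eval x (monomial α a) := by
  have hexp : Real.exp (t * Finsupp.weight w α) = α.prod fun i k => Real.exp (t * w i) ^ k := by
    simp only [Finsupp.weight_apply, Finsupp.sum, Finsupp.prod, Finset.mul_sum, Real.exp_sum,
      nsmul_eq_mul, mul_left_comm t, Real.exp_nat_mul]
  simp only [eval_monomial, weightedDilation, mul_pow, Finsupp.prod_mul, hexp, mul_left_comm a]

lemma tendsto_exp_mul_atTop_nhds_zero {a : ℝ} (ha : a < 0) :
    Tendsto (fun t => Real.exp (t * a)) atTop (𝓝 0) :=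
  Real.tendsto_exp_comp_nhds_zero.2 (tendsto_id.atTop_mul_const_of_neg ha)

lemma tendsto_exp_neg_mul_eval_weightedDilation (h : weightedTotalDegree' w p ≤ m) (x : σ → ℝ) :
    Tendsto (fun t => Real.exp (-(t * m)) * eval (weightedDilation w t x) p) atTop
      (𝓝 (eval x (weightedHomogeneousComponent w m p))) := by
  have hsum (t : ℝ) : Real.exp (-(t * m)) * eval (weightedDilation w t x) p =
      ∑ α ∈ p.support,
        Real.exp (t * (Finsupp.weight w α - m)) * eval x (monomial α (coeff α p)) := by
    conv_lhs => rw [p.as_sum, map_sum, Finset.mul_sum]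
    refine Finset.sum_congr rfl fun α _ => ?_
    rw [eval_weightedDilation_monomial, ← mul_assoc, ← Real.exp_add]
    ring_nf
  simp only [hsum, weightedHomogeneousComponent_apply, Finset.sum_filter, map_sum]
  refine tendsto_finsetSum _ fun α hα => ?_
  have hle : Finsupp.weight w α ≤ m := weightedTotalDegree'_le_coe_iff.1 h α hα
  split_ifs with heq
  · simp only [heq, sub_self, mul_zero, Real.exp_zero, one_mul, tendsto_const_nhds]
  · simpa using (tendsto_exp_mul_atTop_nhds_zero (sub_neg.2 (hle.lt_of_ne heq))).mul_const
      (eval x (monomial α (coeff α p)))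

lemma isBigO_eval_weightedDilation (h : weightedTotalDegree' w p ≤ c) (x : σ → ℝ) :
    (fun t => eval (weightedDilation w t x) p) =O[atTop] fun t => Real.exp (t * c) := by
  have hbounded := (tendsto_exp_neg_mul_eval_weightedDilation h x).isBigO_one ℝ
  simpa [← mul_assoc, ← Real.exp_add] using
    (isBigO_refl (fun t => Real.exp (t * c)) atTop).mul hbounded

lemma weightedTotalDegree'_le_of_isBigO
    (h : ∀ x, (fun t => eval (weightedDilation w t x) p) =O[atTop] fun t => Real.exp (t * c)) :
    weightedTotalDegree' w p ≤ c := by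
  by_contra! hlt
  obtain ⟨m, hm⟩ := WithBot.ne_bot_iff_exists.1 (bot_le.trans_lt hlt).ne'
  have hcm : c < m := by rwa [← hm, WithBot.coe_lt_coe] at hlt
  refine weightedHomogeneousComponent_ne_zero_of_weightedTotalDegree'_eq hm.symm
    (MvPolynomial.funext fun x => ?_)
  have hdecay : Tendsto (fun t => Real.exp (-(t * m)) * Real.exp (t * c)) atTop (𝓝 0) := by
    simpa only [← Real.exp_add, mul_sub, neg_add_eq_sub] using
      tendsto_exp_mul_atTop_nhds_zero (sub_neg.2 hcm)
  rw [map_zero]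
  exact tendsto_nhds_unique (tendsto_exp_neg_mul_eval_weightedDilation hm.ge x)
    (((isBigO_refl _ _).mul (h x)).trans_tendsto hdecay)

lemma weightedTotalDegree'_le_iff_isBigO :
    weightedTotalDegree' w p ≤ c ↔
      ∀ x, (fun t => eval (weightedDilation w t x) p) =O[atTop] fun t => Real.exp (t * c) :=
  ⟨isBigO_eval_weightedDilation, weightedTotalDegree'_le_of_isBigO⟩

lemma weightedTotalDegree'_le_of_isBigO_top {q : MvPolynomial σ ℝ}
    (hpq : (fun x => eval x p) =O[⊤] fun x => eval x q) (hq : weightedTotalDegree' w q ≤ c) :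
    weightedTotalDegree' w p ≤ c := by
  rw [weightedTotalDegree'_le_iff_isBigO] at hq ⊢
  exact fun x => (hpq.comp_tendsto tendsto_top).trans (hq x)

lemma weightedTotalDegree'_pow_le_iff {k : ℕ} (hk : k ≠ 0) :
    weightedTotalDegree' w (p ^ k) ≤ ((k * c : ℝ) : WithBot ℝ) ↔
      weightedTotalDegree' w p ≤ c := by
  have hexp : (fun t => Real.exp (t * (k * c))) = (fun t => Real.exp (t * c)) ^ k := by
    ext t
    rw [Pi.pow_apply, ← Real.exp_nat_mul, mul_left_comm]
  simp only [weightedTotalDegree'_le_iff_isBigO, map_pow, hexp]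
  exact forall_congr' fun x => ⟨IsBigO.of_pow hk, fun h => h.pow k⟩

end WeightedDegree

section NewtonPolytope

variable {n : ℕ}

lemma newtonPolytope_eq_closedConvexHull (p : MvPolynomial (Fin n) ℝ) :
    newtonPolytope n p =
      closedConvexHull ℝ ((fun α : Fin n →₀ ℕ => fun i => (α i : ℝ)) '' ↑p.support) := by
  rw [closedConvexHull_eq_closure_convexHull]
  exact ((p.support.finite_toSet.image _).isClosed_convexHull (𝕜 := ℝ)).closure_eq.symm

lemma mem_newtonPolytope_iff {p : MvPolynomial (Fin n) ℝ} {x : Fin n → ℝ} :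
    x ∈ newtonPolytope n p ↔
      ∀ (w : Fin n → ℝ) (c : ℝ), weightedTotalDegree' w p ≤ c → w ⬝ᵥ x ≤ c := by
  let e : (Fin n → ℝ) ≃ StrongDual ℝ (Fin n → ℝ) :=
    ((dotProductEquiv ℝ (Fin n)).trans LinearMap.toContinuousLinearMap).toEquiv
  have he (w y : Fin n → ℝ) : e w y = w ⬝ᵥ y := rfl
  have hweight (w : Fin n → ℝ) (α : Fin n →₀ ℕ) :
      w ⬝ᵥ (fun i => (α i : ℝ)) = Finsupp.weight w α := by
    simp only [Finsupp.weight_eq_sum, dotProduct, nsmul_eq_mul, mul_comm]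
  simp only [newtonPolytope_eq_closedConvexHull, mem_closedConvexHull_iff_forall_dual_le,
    ← e.forall_congr_right, Set.forall_mem_image, SetLike.mem_coe, he, hweight,
    weightedTotalDegree'_le_coe_iff]

lemma newtonPolytope_subset_of_isBigO_top {f h : MvPolynomial (Fin n) ℝ}
    (hfh : (fun x => eval x f) =O[⊤] fun x => eval x h) :
    newtonPolytope n f ⊆ newtonPolytope n h := by
  intro x hx
  rw [mem_newtonPolytope_iff] at hx ⊢
  exact fun w c hc => hx w c (weightedTotalDegree'_le_of_isBigO_top hfh hc)

lemma newtonPolytope_subset_of_eval_le {f h : MvPolynomial (Fin n) ℝ}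
    (hf : ∀ x, 0 ≤ eval x f) (hfh : ∀ x, eval x f ≤ eval x h) :
    newtonPolytope n f ⊆ newtonPolytope n h :=
  newtonPolytope_subset_of_isBigO_top <| isBigO_of_le _ fun x =>
    norm_le_norm_of_abs_le_abs (abs_le_abs_of_nonneg (hf x) (hfh x))

lemma newtonPolytope_pow (p : MvPolynomial (Fin n) ℝ) {k : ℕ} (hk : k ≠ 0) :
    newtonPolytope n (p ^ k) = (k : ℝ) • newtonPolytope n p := by
  have hkpos : (0 : ℝ) < k := Nat.cast_pos.2 (Nat.pos_of_ne_zero hk)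
  ext x
  rw [Set.mem_smul_set_iff_inv_smul_mem₀ hkpos.ne', mem_newtonPolytope_iff, mem_newtonPolytope_iff]
  refine forall_congr' fun w => ?_
  rw [← (Equiv.mulLeft₀ (k : ℝ) hkpos.ne').forall_congr_right]
  simp only [Equiv.mulLeft₀_apply, weightedTotalDegree'_pow_le_iff hk, dotProduct_smul,
    smul_eq_mul, inv_mul_le_iff₀ hkpos]

lemma newtonPolytope_subset_smul_sum_sq {ι : Type*} {s : Finset ι}
    (g : ι → MvPolynomial (Fin n) ℝ) {j : ι} (hj : j ∈ s) :
    newtonPolytope n (g j) ⊆ (2⁻¹ : ℝ) • newtonPolytope n (∑ i ∈ s, g i ^ 2) := by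
  have hsq : (2 : ℝ) • newtonPolytope n (g j) = newtonPolytope n (g j ^ 2) :=
    (newtonPolytope_pow (g j) two_ne_zero).symm
  rw [Set.subset_smul_set_iff₀ (inv_ne_zero two_ne_zero), inv_inv, hsq]
  refine newtonPolytope_subset_of_eval_le (fun x => ?_) fun x => ?_
  · rw [map_pow]
    exact sq_nonneg _
  · simp only [map_sum, map_pow]
    exact Finset.single_le_sum (f := fun i => eval x (g i) ^ 2) (fun i _ => sq_nonneg _) hj

end NewtonPolytope

/-- Reznick's Newton polytope theorem:
(i) `C(p²) = 2·C(p)`;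
(ii) if `f` and `g` are nonnegative on `ℝⁿ` then `C(f) ⊆ C(f+g)`;
(iii) if `f = Σⱼ gⱼ²` then `C(gⱼ) ⊆ ½·C(f)` for every `j`. -/
theorem statement6 (n : ℕ) :
    (∀ p : MvPolynomial (Fin n) ℝ,
      newtonPolytope n (p ^ 2) = (2 : ℝ) • newtonPolytope n p) ∧
    (∀ f g : MvPolynomial (Fin n) ℝ,
      (∀ x : Fin n → ℝ, 0 ≤ eval x f) → (∀ x : Fin n → ℝ, 0 ≤ eval x g) →
      newtonPolytope n f ⊆ newtonPolytope n (f + g)) ∧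
    (∀ (l : ℕ) (g : Fin l → MvPolynomial (Fin n) ℝ) (f : MvPolynomial (Fin n) ℝ),
      f = ∑ j, g j ^ 2 →
      ∀ j, newtonPolytope n (g j) ⊆ (2⁻¹ : ℝ) • newtonPolytope n f) := by
  refine ⟨fun p => newtonPolytope_pow p two_ne_zero, fun f g hf hg => ?_, ?_⟩
  · refine newtonPolytope_subset_of_eval_le hf fun x => ?_
    rw [map_add]
    exact le_add_of_nonneg_right (hg x)
  · rintro l g f rfl j
    exact newtonPolytope_subset_smul_sum_sq g (Finset.mem_univ j)
end

section
/- Let f ∈ ℚ[X₁,…,Xₙ], let e ≥ 0 be an integer, and let 𝒯 be any subset of the set of monomials of total degree ≤ e. Let C_{f,𝒯} ⊆ ℝⁿ be the convex hull of the set of multi-indices {β + γ₁ + γ₂ : X^β ∈ supp(f), X^{γ₁}, X^{γ₂} ∈ 𝒯} and let 𝒢_{f,𝒯} = {X^α : 2α ∈ C_{f,𝒯}}. Then the following are equivalent: (1) f ∉ RSOS(𝒯); (2) there exists a rational sequence ŷ ∈ ℚ^m, where m is the number of elements of {X^{α+β} : X^α, X^β ∈ 𝒢_{f,𝒯}}, whose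 associated linear form L_ŷ satisfies: for every nonzero polynomial v with supp(v) ⊆ 𝒯 one has L_ŷ(f·v²) < 0, and for every polynomial u with supp(u) ⊆ 𝒢_{f,𝒯} one has L_ŷ(u²) ≥ 0. -/
open MvPolynomial

/-- The convex hull `C_{f,𝒯} ⊆ ℝⁿ` of the multi-indices
`{β + γ₁ + γ₂ : X^β ∈ supp(f), X^{γ₁}, X^{γ₂} ∈ 𝒯}`. -/
noncomputable def hullFT (n : ℕ) (f : MvPolynomial (Fin n) ℚ)
    (𝒯 : Finset (Fin n →₀ ℕ)) : Set (Fin n → ℝ) :=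
  convexHull ℝ
    {x | ∃ β ∈ f.support, ∃ γ₁ ∈ 𝒯, ∃ γ₂ ∈ 𝒯,
      x = fun i => (((β + γ₁ + γ₂ : Fin n →₀ ℕ)) i : ℝ)}

/-- The sparse monomial (exponent) set `𝒢_{f,𝒯} = {α : 2α ∈ C_{f,𝒯}}`. -/
noncomputable def sparseG (n : ℕ) (f : MvPolynomial (Fin n) ℚ)
    (𝒯 : Finset (Fin n →₀ ℕ)) : Set (Fin n →₀ ℕ) :=
  {α | (fun i => (((α + α : Fin n →₀ ℕ)) i : ℝ)) ∈ hullFT n f 𝒯}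

/-!
Condition (2) concerns the values of a single quadratic map `Q (v, u) = u² - f v²` on a
finite-dimensional space. A convex combination of values of `Q` at nonzero points is a sum of such
values, so if `0` is one of these combinations then `f ∈ RSOS(𝒯)`. Otherwise, by homogeneity it
suffices to separate `0` from the image of the unit sphere under `Q`. The convex hull of this image
is compact, and strict positivity on a compact set is an open condition on the separating
functional, so the functional can be taken rational.

Conversely, in `f ∑ vⱼ² = ∑ uᵢ²` the squares on the right cannot cancel at the vertices of the
Newton polytope, which forces `supp(uᵢ) ⊆ 𝒢_{f,𝒯}`; a functional as in (2) would then give the two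
sides different signs.
-/

open scoped Pointwise

section Separation

theorem isCompact_convexHull_of_finiteDimensional {E : Type*} [AddCommGroup E] [Module ℝ E]
    [TopologicalSpace E] [ContinuousAdd E] [ContinuousSMul ℝ E] [FiniteDimensional ℝ E]
    {K : Set E} (hK : IsCompact K) : IsCompact (convexHull ℝ K) := by
  have caratheodory : convexHull ℝ K = ⋃ k ∈ Set.Iic (Module.finrank ℝ E + 1),
      (fun p : (Fin k → ℝ) × (Fin k → E) => ∑ i, p.1 i • p.2 i) ''
        (stdSimplex ℝ (Fin k) ×ˢ Set.univ.pi fun _ => K) := by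
    ext x
    simp only [Set.mem_iUnion, Set.mem_image, Set.mem_prod, Set.mem_univ_pi, Prod.exists]
    constructor
    · intro hx
      obtain ⟨ι, _, z, w, hz, hind, hw, hsum, rfl⟩ := eq_pos_convex_span_of_mem_convexHull hx
      let e := (Fintype.equivFin ι).symm
      refine ⟨Fintype.card ι, hind.card_le_finrank_succ.trans
        (Nat.succ_le_succ (Submodule.finrank_le _)), w ∘ e, z ∘ e,
        ⟨⟨fun i => (hw _).le, ?_⟩, fun i => hz ⟨e i, rfl⟩⟩, ?_⟩
      · rw [← hsum]; exact e.sum_comp w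
      · exact e.sum_comp fun i => w i • z i
    · rintro ⟨k, -, w, z, ⟨hw, hz⟩, rfl⟩
      exact (convex_convexHull ℝ K).sum_mem (fun i _ => hw.1 i) hw.2
        fun i _ => subset_convexHull ℝ K (hz i)
  rw [caratheodory]
  refine (Set.finite_Iic _).isCompact_biUnion fun k _ => ?_
  exact ((isCompact_stdSimplex ℝ (Fin k)).prod (isCompact_univ_pi fun _ => hK)).image (by fun_prop)

variable {ι : Type*} [Fintype ι]

theorem exists_forall_dotProduct_pos {K : Set (ι → ℝ)} (hK : IsCompact K)
    (h0 : 0 ∉ convexHull ℝ K) : ∃ y : ι → ℝ, ∀ a ∈ K, 0 < y ⬝ᵥ a := by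
  classical
  obtain ⟨L, c, hc, hL⟩ := geometric_hahn_banach_point_closed (convex_convexHull ℝ K)
    (isCompact_convexHull_of_finiteDimensional hK).isClosed h0
  refine ⟨fun i => L (Pi.single i 1), fun a ha => ?_⟩
  have hLa : (fun i => L (Pi.single i 1)) ⬝ᵥ a = L a := by
    conv_rhs => rw [← (Pi.basisFun ℝ ι).sum_repr a, map_sum]
    simp [dotProduct, mul_comm]
  rw [map_zero] at hc
  exact hLa ▸ hc.trans (hL a (subset_convexHull ℝ K ha))

theorem isOpen_setOf_forall_dotProduct_pos {K : Set (ι → ℝ)} (hK : IsCompact K) :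
    IsOpen {y : ι → ℝ | ∀ a ∈ K, 0 < y ⬝ᵥ a} := by
  refine isOpen_iff_eventually.2 fun y hy => ?_
  refine hK.eventually_forall_of_forall_eventually fun a ha => ?_
  have hcont : Continuous fun p : (ι → ℝ) × (ι → ℝ) => p.1 ⬝ᵥ p.2 := by fun_prop
  exact hcont.continuousAt.eventually (lt_mem_nhds (hy a ha))

theorem exists_rat_forall_dotProduct_pos {K : Set (ι → ℝ)} (hK : IsCompact K)
    (h0 : 0 ∉ convexHull ℝ K) : ∃ y : ι → ℚ, ∀ a ∈ K, 0 < (fun i => (y i : ℝ)) ⬝ᵥ a := by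
  have hdense : DenseRange (Pi.map fun (_ : ι) (q : ℚ) => (q : ℝ)) :=
    DenseRange.piMap fun _ => Rat.denseRange_cast
  exact hdense.exists_mem_open (isOpen_setOf_forall_dotProduct_pos hK)
    (exists_forall_dotProduct_pos hK h0)

end Separation

section QuadraticMap

theorem continuous_quadraticMap {E F : Type*} [NormedAddCommGroup E] [NormedSpace ℝ E]
    [FiniteDimensional ℝ E] [NormedAddCommGroup F] [NormedSpace ℝ F] (Q : QuadraticMap ℝ E F) :
    Continuous Q := by
  have hQ : ⇑Q = fun v => (2⁻¹ : ℝ) • Q.polarBilin.toContinuousBilinearMap v v := by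
    funext v
    rw [LinearMap.toContinuousBilinearMap_apply, QuadraticMap.polarBilin_apply_apply,
      QuadraticMap.polar_self, ← Nat.cast_smul_eq_nsmul ℝ, Nat.cast_ofNat,
      inv_smul_smul₀ two_ne_zero]
  rw [hQ]
  exact (Q.polarBilin.toContinuousBilinearMap.continuous.clm_apply continuous_id).const_smul _

variable {V W : Type*} [AddCommGroup V] [Module ℝ V] [AddCommGroup W] [Module ℝ W]

/- The weight of each point of a convex combination is a square, hence is absorbed by `Q`. -/
theorem exists_sum_eq_of_mem_convexHull_image_quadraticMap (Q : QuadraticMap ℝ V W) {x : W}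
    (hx : x ∈ convexHull ℝ (Q '' {0}ᶜ)) :
    ∃ (l : ℕ) (v : Fin l → V), v ≠ 0 ∧ ∑ i, Q (v i) = x := by
  obtain ⟨κ, _, c, z, hc, hsum, hz, rfl⟩ := mem_convexHull_iff_exists_fintype.1 hx
  choose v hv hvz using hz
  let e := (Fintype.equivFin κ).symm
  refine ⟨Fintype.card κ, fun i => √(c (e i)) • v (e i), fun h => ?_, ?_⟩
  · obtain ⟨k, -, hk⟩ := Finset.exists_ne_zero_of_sum_ne_zero (hsum ▸ one_ne_zero)
    have hzero := congrFun h (e.symm k)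
    simp only [Equiv.apply_symm_apply, Pi.zero_apply, smul_eq_zero,
      Real.sqrt_eq_zero (hc k)] at hzero
    exact hzero.elim hk (hv k)
  · rw [e.sum_comp fun k => Q (√(c k) • v k)]
    simp only [QuadraticMap.map_smul, Real.mul_self_sqrt (hc _), hvz]

theorem exists_rat_forall_quadraticMap_dotProduct_pos [FiniteDimensional ℝ V] {ι : Type*}
    [Fintype ι] (Q : QuadraticMap ℝ V (ι → ℝ)) (h0 : 0 ∉ convexHull ℝ (Q '' {0}ᶜ)) :
    ∃ y : ι → ℚ, ∀ v ≠ 0, 0 < (fun i => (y i : ℝ)) ⬝ᵥ Q v := by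
  let e := (Module.finBasis ℝ V).equivFun
  let Q' := Q.comp e.symm.toLinearMap
  have hsub : Q' '' Metric.sphere 0 1 ⊆ Q '' {0}ᶜ := by
    rintro _ ⟨c, hc, rfl⟩
    exact ⟨e.symm c, e.symm.map_ne_zero_iff.2 (ne_zero_of_mem_unit_sphere ⟨c, hc⟩), rfl⟩
  obtain ⟨y, hy⟩ := exists_rat_forall_dotProduct_pos
    ((isCompact_sphere 0 1).image (continuous_quadraticMap Q'))
    fun h => h0 (convexHull_mono hsub h)
  refine ⟨y, fun v hv => ?_⟩
  have hev : ‖e v‖ ≠ 0 := norm_ne_zero_iff.2 (e.map_ne_zero_iff.2 hv)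
  have hpos := hy _ ⟨‖e v‖⁻¹ • e v, by simp [norm_smul, hev], rfl⟩
  have hQ' : Q' (‖e v‖⁻¹ • e v) = (‖e v‖⁻¹ * ‖e v‖⁻¹) • Q v := by
    rw [QuadraticMap.map_smul, QuadraticMap.comp_apply]
    simp
  rw [hQ', dotProduct_smul, smul_eq_mul] at hpos
  exact pos_of_mul_pos_right hpos (mul_self_nonneg _)

end QuadraticMap

section NewtonPolytope

variable {σ : Type*}

/-- An exponent multi-index viewed as a real vector, as an additive map. -/
def exponentVector : (σ →₀ ℕ) →+ (σ → ℝ) where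
  toFun α i := α i
  map_zero' := by ext; simp
  map_add' α β := by ext; simp

theorem exponentVector_injective : Function.Injective (exponentVector : (σ →₀ ℕ) → σ → ℝ) :=
  fun _ _ h => Finsupp.ext fun i => Nat.cast_injective (congrFun h i)

/-- The exponents `α` for which `2α` lies in the convex hull of `S`. For `S` the support of `p`
these are the lattice points of half the Newton polytope of `p`. The set `𝒢_{f,𝒯}` is the case
`S = supp(f) + 𝒯 + 𝒯`. -/
def halfNewtonExponents (S : Set (σ →₀ ℕ)) : Set (σ →₀ ℕ) :=
  {α | exponentVector (α + α) ∈ convexHull ℝ (exponentVector '' S)}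

theorem halfNewtonExponents_mono {S T : Set (σ →₀ ℕ)} (h : S ⊆ T) :
    halfNewtonExponents S ⊆ halfNewtonExponents T :=
  fun _ hα => convexHull_mono (Set.image_mono h) hα

theorem halfNewtonExponents_empty : halfNewtonExponents (∅ : Set (σ →₀ ℕ)) = ∅ := by
  simp [halfNewtonExponents]

theorem finite_halfNewtonExponents {S : Set (σ →₀ ℕ)} (hS : S.Finite) :
    (halfNewtonExponents S).Finite := by
  classical
  obtain ⟨b, hb⟩ := hS.bddAbove
  have hhull : convexHull ℝ (exponentVector '' S) ⊆ Set.Iic (exponentVector b) := by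
    refine convexHull_min ?_ (convex_Iic _)
    rintro _ ⟨α, hα, rfl⟩ i
    exact Nat.cast_le.2 (hb hα i)
  refine (Set.finite_Icc 0 b).subset fun α hα => ⟨fun _ => Nat.zero_le _, fun i => ?_⟩
  have h2 : ((α + α) i : ℝ) ≤ b i := hhull hα i
  exact (Nat.le_add_left _ _).trans (Nat.cast_le.1 h2)

theorem eq_of_add_eq_add_self_of_mem_extremePoints {D : Set (σ →₀ ℕ)} {α β γ : σ →₀ ℕ}
    (hα : exponentVector α ∈ (convexHull ℝ (exponentVector '' D)).extremePoints ℝ)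
    (hβ : β ∈ D) (hγ : γ ∈ D) (h : β + γ = α + α) : β = α ∧ γ = α := by
  have hmid : midpoint ℝ (exponentVector β) (exponentVector γ) = exponentVector α := by
    rw [midpoint_eq_smul_add, ← map_add, h, map_add, ← midpoint_eq_smul_add, midpoint_self]
  have hseg := hmid ▸ midpoint_mem_openSegment (𝕜 := ℝ) (exponentVector β) (exponentVector γ)
  have hmem : ∀ δ ∈ D, exponentVector δ ∈ convexHull ℝ (exponentVector '' D) :=
    fun δ hδ => subset_convexHull ℝ _ (Set.mem_image_of_mem _ hδ)
  exact ((mem_extremePoints.1 hα).2 _ (hmem β hβ) _ (hmem γ hγ) hseg).imp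
    (fun h => exponentVector_injective h) (fun h => exponentVector_injective h)

theorem coeff_sq_add_self_of_mem_extremePoints {R : Type*} [CommSemiring R]
    {p : MvPolynomial σ R} {D : Set (σ →₀ ℕ)} {α : σ →₀ ℕ} (hp : ↑p.support ⊆ D)
    (hα : exponentVector α ∈ (convexHull ℝ (exponentVector '' D)).extremePoints ℝ) :
    (p ^ 2).coeff (α + α) = p.coeff α ^ 2 := by
  classical
  rw [sq, coeff_mul, sq]
  refine Finset.sum_eq_single (α, α) ?_ (fun h => by simp at h)
  rintro ⟨β, γ⟩ hβγ hne
  by_contra hprod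
  obtain ⟨hβ, hγ⟩ := eq_of_add_eq_add_self_of_mem_extremePoints hα
    (hp (mem_support_iff.2 (left_ne_zero_of_mul hprod)))
    (hp (mem_support_iff.2 (right_ne_zero_of_mul hprod)))
    (Finset.HasAntidiagonal.mem_antidiagonal.1 hβγ)
  exact hne (Prod.ext hβ hγ)

theorem convexHull_extremePoints_convexHull_of_finite {E : Type*} [AddCommGroup E] [Module ℝ E]
    [TopologicalSpace E] [IsTopologicalAddGroup E] [ContinuousSMul ℝ E] [LocallyConvexSpace ℝ E]
    [T2Space E] {D : Set E} (hD : D.Finite) :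
    convexHull ℝ ((convexHull ℝ D).extremePoints ℝ) = convexHull ℝ D := by
  have hfin : ((convexHull ℝ D).extremePoints ℝ).Finite := hD.subset extremePoints_convexHull_subset
  rw [← (hfin.isClosed_convexHull ℝ).closure_eq]
  exact closure_convexHull_extremePoints (hD.isCompact_convexHull ℝ) (convex_convexHull ℝ D)

variable {R : Type*} [CommRing R] [LinearOrder R] [IsStrictOrderedRing R]
  {ι : Type*} [Fintype ι] (u : ι → MvPolynomial σ R)

/- Squares cannot cancel at `2α` for a vertex `α` of the convex hull of all supports, and these
vertices span that hull. -/
theorem support_subset_halfNewtonExponents_sum_sq (i : ι) :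
    ↑(u i).support ⊆ halfNewtonExponents (↑(∑ i, u i ^ 2).support : Set (σ →₀ ℕ)) := by
  set D : Set (σ →₀ ℕ) := ⋃ i, ↑(u i).support
  set C := convexHull ℝ (exponentVector '' (↑(∑ i, u i ^ 2).support : Set (σ →₀ ℕ)))
  have hD : D.Finite := Set.finite_iUnion fun i => (u i).support.finite_toSet
  have hsub : ∀ i, ↑(u i).support ⊆ D := Set.subset_iUnion fun i => (↑(u i).support : Set (σ →₀ ℕ))
  have hvertex : (convexHull ℝ (exponentVector '' D)).extremePoints ℝ ⊆ ((2 : ℝ) • ·) ⁻¹' C := by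
    intro x hx
    obtain ⟨α, hαD, rfl⟩ := extremePoints_convexHull_subset hx
    obtain ⟨j, hj⟩ := Set.mem_iUnion.1 hαD
    have hcoeff : (∑ i, u i ^ 2).coeff (α + α) = ∑ i, (u i).coeff α ^ 2 := by
      rw [coeff_sum]
      exact Finset.sum_congr rfl fun i _ => coeff_sq_add_self_of_mem_extremePoints (hsub i) hx
    have hpos : 0 < ∑ i, (u i).coeff α ^ 2 :=
      Finset.sum_pos' (fun i _ => sq_nonneg _)
        ⟨j, Finset.mem_univ j, sq_pos_of_ne_zero (mem_support_iff.1 hj)⟩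
    refine subset_convexHull ℝ _ ⟨α + α, mem_support_iff.2 (hcoeff ▸ hpos.ne'), ?_⟩
    exact (map_add _ _ _).trans (two_smul ℝ _).symm
  have hhull : convexHull ℝ (exponentVector '' D) ⊆ ((2 : ℝ) • ·) ⁻¹' C := by
    rw [← convexHull_extremePoints_convexHull_of_finite (hD.image _)]
    exact convexHull_min hvertex ((convex_convexHull ℝ _).smul_preimage 2)
  intro α hα
  have h2α := hhull (subset_convexHull ℝ _ (Set.mem_image_of_mem _ (hsub i hα)))
  rwa [Set.mem_preimage, two_smul, ← map_add] at h2α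

theorem eq_zero_of_sum_sq_eq_zero_s7 (h : ∑ i, u i ^ 2 = 0) (i : ι) : u i = 0 := by
  have hsupp := support_subset_halfNewtonExponents_sum_sq u i
  rw [h, support_zero, Finset.coe_empty, halfNewtonExponents_empty, Set.subset_empty_iff,
    Finset.coe_eq_empty] at hsupp
  exact support_eq_empty.1 hsupp

end NewtonPolytope

section LForm

variable {n : ℕ}

theorem LForm_eq_constr (y : (Fin n →₀ ℕ) → ℝ) :
    LForm n y = (basisMonomials (Fin n) ℝ).constr ℝ y := by
  funext p
  rw [Module.Basis.constr_apply]
  exact Finset.sum_congr rfl fun α _ => mul_comm _ _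

theorem LForm_eq_dotProduct {M : Finset (Fin n →₀ ℕ)} (y : (Fin n →₀ ℕ) → ℝ)
    {p : MvPolynomial (Fin n) ℝ} (hp : p.support ⊆ M) :
    LForm n y p = (fun m : M => y m) ⬝ᵥ fun m : M => p.coeff m := by
  rw [LForm, Finset.sum_subset hp fun α _ hα => by rw [notMem_support_iff.1 hα, mul_zero]]
  exact (Finset.sum_coe_sort M fun α => y α * p.coeff α).symm

end LForm

section SquareGap

variable {σ R : Type*} [CommRing R] (f : MvPolynomial σ R) (T G : Set (σ →₀ ℕ))

/-- The quadratic map `(v, u) ↦ u² - f v²` on pairs of polynomials with supports in `T` and `G`.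
An identity `f ∑ vᵢ² = ∑ uᵢ²` between such polynomials is a vanishing sum of values of this map. -/
noncomputable def squareGap :
    QuadraticMap R (restrictSupport R T × restrictSupport R G) (MvPolynomial σ R) :=
  let v := (restrictSupport R T).subtype ∘ₗ LinearMap.fst R _ _
  let u := (restrictSupport R G).subtype ∘ₗ LinearMap.snd R _ _
  QuadraticMap.linMulLin u u - (LinearMap.mulLeft R f).compQuadraticMap (QuadraticMap.linMulLin v v)

theorem squareGap_apply (w : restrictSupport R T × restrictSupport R G) :
    squareGap f T G w = (w.2 : MvPolynomial σ R) ^ 2 - f * (w.1 : MvPolynomial σ R) ^ 2 := by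
  simp [squareGap, sq]

theorem squareGap_mem_restrictSupport (w : restrictSupport R T × restrictSupport R G) :
    squareGap f T G w ∈ restrictSupport R (G + G ∪ (↑f.support + (T + T))) := by
  rw [squareGap_apply, sq, sq]
  refine sub_mem (restrictSupport_mono R Set.subset_union_left ?_)
    (restrictSupport_mono R Set.subset_union_right ?_)
  · rw [restrictSupport_add]
    exact Submodule.mul_mem_mul w.2.2 w.2.2
  · rw [restrictSupport_add, restrictSupport_add]
    exact Submodule.mul_mem_mul ((mem_restrictSupport_iff R).2 subset_rfl)
      (Submodule.mul_mem_mul w.1.2 w.1.2)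

theorem finiteDimensional_restrictSupport {K : Type*} [Field K] {T : Set (σ →₀ ℕ)}
    (hT : T.Finite) : FiniteDimensional K (restrictSupport K T) :=
  have := hT.to_subtype
  .of_basis (basisRestrictSupport K T)

end SquareGap

section Duality

variable {n : ℕ} {f : MvPolynomial (Fin n) ℝ} {𝒯 : Finset (Fin n →₀ ℕ)}

theorem zero_notMem_convexHull_image_squareGap (hf : ¬ RSOS n 𝒯 f) (G : Set (Fin n →₀ ℕ)) :
    0 ∉ convexHull ℝ (squareGap f (𝒯 : Set (Fin n →₀ ℕ)) G '' {0}ᶜ) := by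
  intro h0
  obtain ⟨l, w, hw, hsum⟩ := exists_sum_eq_of_mem_convexHull_image_quadraticMap _ h0
  have hcert : f * ∑ i, ((w i).1 : MvPolynomial (Fin n) ℝ) ^ 2 =
      ∑ i, ((w i).2 : MvPolynomial (Fin n) ℝ) ^ 2 := by
    simp only [squareGap_apply, Finset.sum_sub_distrib, ← Finset.mul_sum] at hsum
    exact (sub_eq_zero.1 hsum).symm
  refine hf ⟨l, l, fun i => (w i).2, fun i => (w i).1, fun i => (w i).1.2, fun hv => hw ?_, hcert⟩
  rw [hv, mul_zero] at hcert
  funext i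
  exact Prod.ext (Subtype.ext (eq_zero_of_sum_sq_eq_zero_s7 _ hv i))
    (Subtype.ext (eq_zero_of_sum_sq_eq_zero_s7 _ hcert.symm i))

theorem exists_rat_forall_LForm_squareGap_pos (hf : ¬ RSOS n 𝒯 f) {G : Set (Fin n →₀ ℕ)}
    (hG : G.Finite) : ∃ y : (Fin n →₀ ℕ) → ℚ, ∀ w ≠ 0,
      0 < LForm n (fun α => (y α : ℝ)) (squareGap f (𝒯 : Set (Fin n →₀ ℕ)) G w) := by
  set Q := squareGap f (𝒯 : Set (Fin n →₀ ℕ)) G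
  have := finiteDimensional_restrictSupport (K := ℝ) 𝒯.finite_toSet
  have := finiteDimensional_restrictSupport (K := ℝ) hG
  obtain ⟨M, hM⟩ := ((hG.add hG).union
    (f.support.finite_toSet.add (𝒯.finite_toSet.add 𝒯.finite_toSet))).exists_finset_coe
  have hQM : ∀ w, Q w ∈ restrictSupport ℝ (M : Set (Fin n →₀ ℕ)) :=
    fun w => hM ▸ squareGap_mem_restrictSupport f _ G w
  let φ : MvPolynomial (Fin n) ℝ →ₗ[ℝ] M → ℝ := LinearMap.pi fun m => lcoeff ℝ m.1
  have hφ : ∀ p ∈ restrictSupport ℝ (M : Set (Fin n →₀ ℕ)), φ p = 0 → p = 0 := by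
    intro p hp h
    ext α
    by_cases hα : α ∈ M
    · exact congrFun h ⟨α, hα⟩
    · exact notMem_support_iff.1 fun hαp => hα (hp hαp)
  have h0 : 0 ∉ convexHull ℝ (φ.compQuadraticMap Q '' {0}ᶜ) := by
    have himage : φ.compQuadraticMap Q '' {0}ᶜ = φ '' (Q '' {0}ᶜ) := by
      rw [← Set.image_comp]; rfl
    rw [himage, ← φ.image_convexHull]
    rintro ⟨p, hp, hφp⟩
    have hpM := convexHull_min (Set.image_subset_iff.2 fun w _ => hQM w)
      (restrictSupport ℝ (M : Set (Fin n →₀ ℕ))).convex hp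
    exact zero_notMem_convexHull_image_squareGap hf G (hφ p hpM hφp ▸ hp)
  obtain ⟨y, hy⟩ := exists_rat_forall_quadraticMap_dotProduct_pos _ h0
  refine ⟨Function.extend Subtype.val y 0, fun w hw => ?_⟩
  rw [LForm_eq_dotProduct _ (Finset.coe_subset.1 ((mem_restrictSupport_iff ℝ).1 (hQM w)))]
  simp only [Subtype.val_injective.extend_apply]
  exact hy w hw

theorem exists_rat_LForm_of_not_RSOS (hf : ¬ RSOS n 𝒯 f) {G : Set (Fin n →₀ ℕ)} (hG : G.Finite) :
    ∃ y : (Fin n →₀ ℕ) → ℚ,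
      (∀ v : MvPolynomial (Fin n) ℝ, v ≠ 0 → v.support ⊆ 𝒯 →
        LForm n (fun α => (y α : ℝ)) (f * v ^ 2) < 0) ∧
      (∀ u : MvPolynomial (Fin n) ℝ, u ≠ 0 → ↑u.support ⊆ G →
        0 < LForm n (fun α => (y α : ℝ)) (u ^ 2)) := by
  obtain ⟨y, hy⟩ := exists_rat_forall_LForm_squareGap_pos hf hG
  refine ⟨y, fun v hv hv𝒯 => ?_, fun u hu huG => ?_⟩
  · have h := hy (⟨v, hv𝒯⟩, 0) fun h => hv (congrArg Subtype.val (Prod.mk.inj h).1)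
    simpa [squareGap_apply, LForm_eq_constr] using h
  · have h := hy (0, ⟨u, huG⟩) fun h => hu (congrArg Subtype.val (Prod.mk.inj h).2)
    simpa [squareGap_apply] using h

theorem support_subset_halfNewtonExponents_of_mul_sum_sq_eq {l l' : ℕ}
    {u : Fin l → MvPolynomial (Fin n) ℝ} {v : Fin l' → MvPolynomial (Fin n) ℝ}
    (hv : ∀ j, (v j).support ⊆ 𝒯) (h : f * ∑ j, v j ^ 2 = ∑ i, u i ^ 2) (i : Fin l) :
    ↑(u i).support ⊆ halfNewtonExponents (f.support + 𝒯 + 𝒯 : Set (Fin n →₀ ℕ)) := by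
  refine (support_subset_halfNewtonExponents_sum_sq u i).trans (halfNewtonExponents_mono ?_)
  rw [← h, add_assoc, ← mem_restrictSupport_iff, restrictSupport_add, restrictSupport_add]
  refine Submodule.mul_mem_mul ((mem_restrictSupport_iff ℝ).2 subset_rfl) (sum_mem fun j _ => ?_)
  exact sq (v j) ▸ Submodule.mul_mem_mul (hv j) (hv j)

theorem not_RSOS_of_forall_LForm {y : (Fin n →₀ ℕ) → ℝ}
    (hneg : ∀ v : MvPolynomial (Fin n) ℝ, v ≠ 0 → v.support ⊆ 𝒯 → LForm n y (f * v ^ 2) < 0)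
    (hnonneg : ∀ u : MvPolynomial (Fin n) ℝ,
      ↑u.support ⊆ halfNewtonExponents (f.support + 𝒯 + 𝒯 : Set (Fin n →₀ ℕ)) →
        0 ≤ LForm n y (u ^ 2)) :
    ¬ RSOS n 𝒯 f := by
  rintro ⟨l, l', u, v, hv, hv0, h⟩
  obtain ⟨j, -, hj⟩ := Finset.exists_ne_zero_of_sum_ne_zero hv0
  have hle : ∀ j, LForm n y (f * v j ^ 2) ≤ 0 := fun j => by
    obtain hvj | hvj := eq_or_ne (v j) 0
    · simp [hvj, LForm_eq_constr]
    · exact (hneg _ hvj (hv j)).le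
  have hlt : ∑ j, LForm n y (f * v j ^ 2) < 0 :=
    Finset.sum_neg' (fun j _ => hle j)
      ⟨j, Finset.mem_univ j, hneg _ (ne_zero_pow two_ne_zero hj) (hv j)⟩
  have hge : 0 ≤ ∑ i, LForm n y (u i ^ 2) := Finset.sum_nonneg fun i _ =>
    hnonneg _ (support_subset_halfNewtonExponents_of_mul_sum_sq_eq hv h i)
  rw [LForm_eq_constr] at hlt hge
  rw [← map_sum, ← Finset.mul_sum, h, map_sum] at hlt
  exact hlt.not_ge hge

end Duality

theorem sparseG_eq_halfNewtonExponents (n : ℕ) (f : MvPolynomial (Fin n) ℚ)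
    (𝒯 : Finset (Fin n →₀ ℕ)) : sparseG n f 𝒯 = halfNewtonExponents
      ((f.map (algebraMap ℚ ℝ)).support + 𝒯 + 𝒯 : Set (Fin n →₀ ℕ)) := by
  have hgen : {x : Fin n → ℝ | ∃ β ∈ f.support, ∃ γ₁ ∈ 𝒯, ∃ γ₂ ∈ 𝒯,
      x = fun i => (((β + γ₁ + γ₂ : Fin n →₀ ℕ)) i : ℝ)} =
        exponentVector '' (f.support + 𝒯 + 𝒯 : Set (Fin n →₀ ℕ)) := by
    ext x
    simp only [Set.mem_image, Set.mem_add]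
    constructor
    · rintro ⟨β, hβ, γ₁, h₁, γ₂, h₂, rfl⟩
      exact ⟨_, ⟨_, ⟨β, hβ, γ₁, h₁, rfl⟩, γ₂, h₂, rfl⟩, rfl⟩
    · rintro ⟨_, ⟨_, ⟨β, hβ, γ₁, h₁, rfl⟩, γ₂, h₂, rfl⟩, rfl⟩
      exact ⟨β, hβ, γ₁, h₁, γ₂, h₂, rfl⟩
  rw [support_map_of_injective f (algebraMap ℚ ℝ).injective]
  ext α
  rw [sparseG, hullFT, hgen]
  rfl

theorem statement7_general (n : ℕ) (f : MvPolynomial (Fin n) ℝ) (𝒯 : Finset (Fin n →₀ ℕ)) :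
    ¬ RSOS n 𝒯 f ↔
      ∃ yhat : (Fin n →₀ ℕ) → ℚ,
        (∀ v : MvPolynomial (Fin n) ℝ, v ≠ 0 → v.support ⊆ 𝒯 →
          LForm n (fun α => (yhat α : ℝ)) (f * v ^ 2) < 0) ∧
        (∀ u : MvPolynomial (Fin n) ℝ,
          ↑u.support ⊆ halfNewtonExponents (f.support + 𝒯 + 𝒯 : Set (Fin n →₀ ℕ)) →
            0 ≤ LForm n (fun α => (yhat α : ℝ)) (u ^ 2)) := by
  refine ⟨fun hf => ?_, fun ⟨_, hneg, hnonneg⟩ => not_RSOS_of_forall_LForm hneg hnonneg⟩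
  have hfin := finite_halfNewtonExponents
    ((f.support.finite_toSet.add 𝒯.finite_toSet).add 𝒯.finite_toSet)
  obtain ⟨yhat, hneg, hpos⟩ := exists_rat_LForm_of_not_RSOS hf hfin
  refine ⟨yhat, hneg, fun u hu => ?_⟩
  obtain rfl | hu0 := eq_or_ne u 0
  · simp [LForm]
  · exact (hpos u hu0 hu).le

/-- sparse version: for `f ∈ ℚ[X]`, `f ∉ RSOS(𝒯)` iff there exists a
rational sequence `ŷ` whose linear form satisfies `L_ŷ(f·v²) < 0` for every nonzero
`v` with `supp(v) ⊆ 𝒯`, and `L_ŷ(u²) ≥ 0` for every `u` with `supp(u) ⊆ 𝒢_{f,𝒯}`. -/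
theorem statement7 (n e : ℕ) (f : MvPolynomial (Fin n) ℚ)
    (𝒯 : Finset (Fin n →₀ ℕ)) (h𝒯 : ∀ α ∈ 𝒯, α.degree ≤ e) :
    ¬ RSOS n 𝒯 (f.map (algebraMap ℚ ℝ)) ↔
      ∃ yhat : (Fin n →₀ ℕ) → ℚ,
        (∀ v : MvPolynomial (Fin n) ℝ, v ≠ 0 → v.support ⊆ 𝒯 →
          LForm n (fun α => (yhat α : ℝ)) ((f.map (algebraMap ℚ ℝ)) * v ^ 2) < 0) ∧
        (∀ u : MvPolynomial (Fin n) ℝ, ↑u.support ⊆ sparseG n f 𝒯 →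
          0 ≤ LForm n (fun α => (yhat α : ℝ)) (u ^ 2)) := by
  rw [sparseG_eq_halfNewtonExponents]
  exact statement7_general n (f.map (algebraMap ℚ ℝ)) 𝒯
end
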